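/- Every Coxeter–Knuth equivalence class of reduced words for a permutation w contains exactly one Yamanouchi reduced word. -/

import Mathlib

open List

namespace EG

/-! ## Words, permutations, and reduced words.

A word is a list of positive natural numbers `(ρ_ℓ, …, ρ_1)`, read left to right,
representing the product of simple transpositions `s_{ρ_ℓ} ⋯ s_{ρ_1}`. -/

/-- The permutation of `ℕ` represented by a word. -/
def toPerm (ρ : List ℕ) : Equiv.Perm ℕ :=
  (ρ.map fun i => Equiv.swap i (i + 1)).prod

/-- `ρ` is a reduced word: its letters are positive, and no shorter word represents
the same permutation. -/
def IsReducedWord (ρ : List ℕ) : Prop :=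
  (∀ i ∈ ρ, 1 ≤ i) ∧
    ∀ σ : List ℕ, (∀ i ∈ σ, 1 ≤ i) → toPerm σ = toPerm ρ → ρ.length ≤ σ.length

/-- `ρ` is a reduced word for the permutation `w`. -/
def ReducedWordFor (ρ : List ℕ) (w : Equiv.Perm ℕ) : Prop :=
  IsReducedWord ρ ∧ toPerm ρ = w

/-! ## Elementary Coxeter–Knuth relations. -/

/-- The elementary Coxeter–Knuth move on a consecutive triple
`(a, b, c) = (ρ_{i+1}, ρ_i, ρ_{i−1})`. -/
def ckTriple (a b c : ℕ) : ℕ × ℕ × ℕ :=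
  if a = c then (b, a, b)
  else if (c > a ∧ a > b) ∨ (c < a ∧ a < b) then (a, c, b)
  else if (a > c ∧ c > b) ∨ (a < c ∧ c < b) then (b, a, c)
  else (a, b, c)

/-- The elementary Coxeter–Knuth relation `𝔡_i`, acting on the letters
`ρ_{i+1} ρ_i ρ_{i−1}` of a word `ρ = (ρ_ℓ, …, ρ_1)` (indexed from the right). -/
def ckMove (i : ℕ) (ρ : List ℕ) : List ℕ :=
  if 2 ≤ i ∧ i + 1 ≤ ρ.length then
    let p := ρ.length - i - 1
    let t := ckTriple (ρ.getD p 0) (ρ.getD (p + 1) 0) (ρ.getD (p + 2) 0)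
    ((ρ.set p t.1).set (p + 1) t.2.1).set (p + 2) t.2.2
  else ρ

/-- Two words are Coxeter–Knuth equivalent if one is obtained from the other by a
finite sequence of elementary Coxeter–Knuth relations. -/
def CKEquiv (ρ σ : List ℕ) : Prop :=
  ∃ ms : List ℕ, σ = ms.foldl (fun w i => ckMove i w) ρ

/-! ## Run decompositions and descent tableaux. -/

/-- Split a list into maximal blocks, breaking between consecutive letters `a`, `b`
whenever `brk a b` holds. -/
def splitWhen (brk : ℕ → ℕ → Bool) : List ℕ → List (List ℕ)
  | [] => []
  | [a] => [[a]]
  | a :: b :: rest =>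
    match splitWhen brk (b :: rest) with
    | r :: rs => if brk a b then [a] :: r :: rs else (a :: r) :: rs
    | [] => [[a]]

/-- The run decomposition of a word into maximal strictly increasing runs, listed
left to right (so the list is `[ρ⁽ᵏ⁾, …, ρ⁽¹⁾]`, with `ρ⁽¹⁾` the final run). -/
def runs (ρ : List ℕ) : List (List ℕ) := splitWhen (fun a b => decide (b ≤ a)) ρ

/-- The rows of the descent tableau `𝔻(ρ)`, listed bottom to top:
`[ρ⁽¹⁾, …, ρ⁽ᵏ⁾]`. -/
def rowsOf (ρ : List ℕ) : List (List ℕ) := (runs ρ).reverse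

/-- The row reading word of a tableau whose rows are listed bottom to top:
read rows left to right, starting with the top row. -/
def wordOf (R : List (List ℕ)) : List ℕ := R.reverse.flatten

/-- The descent composition `Des(ρ) = (|ρ⁽¹⁾|, …, |ρ⁽ᵏ⁾|)`. -/
def DesComp (ρ : List ℕ) : List ℕ := (rowsOf ρ).map List.length

/-- A list of rows (bottom to top) is an increasing Young tableau of partition shape:
rows strictly increase left to right, shape is a partition, and columns strictly
increase bottom to top. -/
def IsIncreasingYoungRows (R : List (List ℕ)) : Prop :=
  (∀ r ∈ R, r.Chain' (· < ·)) ∧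
    R.Chain' (fun lo hi => hi.length ≤ lo.length ∧
      ∀ j < hi.length, lo.getD j 0 < hi.getD j 0)

/-! ## The drop map on a pair of increasing rows. -/

/-- Increment the first `n` letters of a list by `1`. -/
def incFirst : ℕ → List ℕ → List ℕ
  | 0, l => l
  | _ + 1, [] => []
  | n + 1, a :: l => (a + 1) :: incFirst n l

/-- Decrement the first `n` letters of a list by `1`. -/
def decFirst : ℕ → List ℕ → List ℕ
  | 0, l => l
  | _ + 1, [] => []
  | n + 1, a :: l => (a - 1) :: decFirst n l

/-- `bCount t1 i [s_i, s_{i+1}, …]` is the largest `b` with `t1 = s_j + j` for all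
`i ≤ j < i + b`. -/
def bCount (t1 : ℕ) : ℕ → List ℕ → ℕ
  | _, [] => 0
  | i, s :: rest => if t1 = s + i then bCount t1 (i + 1) rest + 1 else 0

/-- Index of the first failure `τ_j ≤ σ_j` in the drop alignment of `σ` below `τ`. -/
def failIdx (τ σ : List ℕ) : Option ℕ :=
  (τ.zip σ).findIdx? (fun p => decide (p.1 ≤ p.2))

/-- Fueled computation of the drop of the row `σ` below the row `τ`, returning the
new pair (top row, bottom row). -/
def dropPairAux : ℕ → List ℕ → List ℕ → List ℕ × List ℕ
  | 0, τ, σ => (τ, σ)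
  | fuel + 1, τ, σ =>
    match failIdx τ σ with
    | none =>
      if σ.length < τ.length then (τ.take σ.length, σ ++ τ.drop σ.length)
      else (τ, σ)
    | some j =>
      let x := τ.getD j 0
      let τr := τ.drop (j + 1)
      let σr := σ.drop j
      let res := dropPairAux fuel τr σr
      let l1 := (failIdx τr σr).getD τr.length
      let b := if l1 = 0 then 0
               else if x + 1 = τr.headD 0 then bCount (τr.headD 0) 1 (σr.take l1) else 0
      (τ.take j ++ res.1, σ.take j ++ x :: incFirst b res.2)

/-- The drop of the row `σ` below the row `τ`: the pair (new top row, new bottom row). -/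
def dropPair (τ σ : List ℕ) : List ℕ × List ℕ := dropPairAux (τ.length + 1) τ σ

/-- The word `drop(τσ)`. -/
def dropW (τ σ : List ℕ) : List ℕ := (dropPair τ σ).1 ++ (dropPair τ σ).2

/-- Apply `drop` to rows `i` and `i+1` (1-indexed from the bottom) of a list of rows. -/
def dropAt : ℕ → List (List ℕ) → List (List ℕ)
  | 1, σr :: τr :: rest => (dropPair τr σr).2 :: (dropPair τr σr).1 :: rest
  | n + 2, r :: R => r :: dropAt (n + 1) R
  | _, R => R

/-- The map `drop_i` on words: replace the runs `ρ⁽ⁱ⁺¹⁾ ρ⁽ⁱ⁾` of the run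
decomposition by `drop(ρ⁽ⁱ⁺¹⁾ ρ⁽ⁱ⁾)`. -/
def dropWordAt (i : ℕ) (ρ : List ℕ) : List ℕ := wordOf (dropAt i (rowsOf ρ))

/-- One sweep of all the maps `drop_i`. -/
def sweepDrop (ρ : List ℕ) : List ℕ :=
  (List.range (runs ρ).length).foldl (fun w i => dropWordAt (i + 1) w) ρ

/-- The drop `drop(ρ)` of a word: repeatedly apply the maps `drop_i` until reaching
the fixed point (an increasing Young tableau). -/
def dropFull (ρ : List ℕ) : List ℕ := sweepDrop^[ρ.length * ρ.length + 1] ρ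

/-! ## The lift map on a pair of increasing rows. -/

/-- `bCount2 x i τblk σblk` is the largest `b` with `τ_j = σ_j = x + j` for all
`i ≤ j < i + b`. -/
def bCount2 (x : ℕ) : ℕ → List ℕ → List ℕ → ℕ
  | i, t :: ts, s :: ss =>
      if t = x + i ∧ s = x + i then bCount2 x (i + 1) ts ss + 1 else 0
  | _, _, _ => 0

/-- Index of the first failure (from the right) in the lift alignment of `τ` above
`σ`: here both rows are given reversed. -/
def liftFailIdx (τR σR : List ℕ) : Option ℕ :=
  (τR.zip σR).findIdx? (fun p => decide (p.1 < p.2))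

/-- Fueled computation of the lift of the row `τ` above the row `σ`, on reversed
rows; returns the new (top row, bottom row), reversed. -/
def liftPairAuxR : ℕ → List ℕ → List ℕ → List ℕ × List ℕ
  | 0, τR, σR => (τR, σR)
  | fuel + 1, τR, σR =>
    match liftFailIdx τR σR with
    | none => (τR, σR)
    | some j =>
      let x := σR.getD j 0
      let τr := τR.drop j
      let σr := σR.drop (j + 1)
      let res := liftPairAuxR fuel τr σr
      let τblk := (τR.take j).reverse
      let σblk := (σR.take j).reverse
      let b := if σblk.headD 0 = x + 1 then bCount2 x 1 τblk σblk else 0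
      (τR.take j ++ x :: res.1, (decFirst b σblk).reverse ++ res.2)

/-- Check that the lift alignment leaves no unmatched letters of `σ` (no letter of
`σ` other than the `x_j`'s lacks a letter of `τ` above it); when some letter is
left over, the lift acts trivially. -/
def liftOkAux : ℕ → List ℕ → List ℕ → Bool
  | 0, _, _ => true
  | fuel + 1, τR, σR =>
    match liftFailIdx τR σR with
    | none => σR.length ≤ τR.length
    | some j => liftOkAux fuel (τR.drop j) (σR.drop (j + 1))

/-- The lift of the row `τ` above the row `σ`: the pair (new top row, new bottom row). -/
def liftPair (τ σ : List ℕ) : List ℕ × List ℕ :=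
  if liftOkAux (σ.length + 1) τ.reverse σ.reverse then
    let r := liftPairAuxR (σ.length + 1) τ.reverse σ.reverse
    (r.1.reverse, r.2.reverse)
  else (τ, σ)

/-- The word `lift(τσ)`. -/
def liftW (τ σ : List ℕ) : List ℕ := (liftPair τ σ).1 ++ (liftPair τ σ).2

/-- Apply `lift` to rows `i` and `i+1` (1-indexed from the bottom) of a list of rows. -/
def liftAt : ℕ → List (List ℕ) → List (List ℕ)
  | 1, σr :: τr :: rest => (liftPair τr σr).2 :: (liftPair τr σr).1 :: rest
  | n + 2, r :: R => r :: liftAt (n + 1) R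
  | _, R => R

/-- The lifting sequence `lift_{[i,j]} = lift_j ∘ ⋯ ∘ lift_i`. -/
def liftSeq (i j : ℕ) (T : List (List ℕ)) : List (List ℕ) :=
  (List.range' i (j + 1 - i)).foldl (fun t k => liftAt k t) T

/-- Fueled check that `lift_i, lift_{i+1}, …` all act faithfully, for `n` steps. -/
def faithfulAux : ℕ → ℕ → List (List ℕ) → Bool
  | 0, _, _ => false
  | n + 1, i, T =>
    let T' := liftAt i T
    if T' = T then false
    else if n = 0 then true
    else faithfulAux n (i + 1) T'

/-- The lifting sequence `lift_{[i,j]}` acts faithfully on `T`. -/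
def faithfulSeq (i j : ℕ) (T : List (List ℕ)) : Bool :=
  if i ≤ j then faithfulAux (j + 1 - i) i T else false

/-- Find the canonical move: the maximal `j` admitting some `i ≤ j` with
`lift_{[i,j]}` faithful, together with the minimal such `i`. -/
def findMove (T : List (List ℕ)) : Option (ℕ × ℕ) :=
  (List.range (T.length + 1)).reverse.findSome? (fun j =>
    ((List.range' 1 j).find? (fun i => faithfulSeq i j T)).map (fun i => (i, j)))

/-- Fueled canonical lifting loop. -/
def liftCanonAux : ℕ → List (List ℕ) → List (List ℕ)
  | 0, T => T
  | fuel + 1, T =>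
    match findMove T with
    | none => T
    | some ij => liftCanonAux fuel (liftSeq ij.1 ij.2 T)

/-- The canonical lifting algorithm applied to a tableau (rows bottom to top). -/
def liftCanon (T : List (List ℕ)) : List (List ℕ) :=
  liftCanonAux (T.flatten.length * T.length + 1) T

/-- The word `lift(ρ)`: the row reading word of the canonical lift of `𝔻(ρ)`. -/
def liftWord (ρ : List ℕ) : List ℕ := wordOf (liftCanon (rowsOf ρ))

/-! ## Weak descent compositions. -/

/-- From the list of minima `[r_k, …, r_1]` of the runs (topmost first), compute
`[r̂_k, …, r̂_1]` where `r̂_k = r_k` and `r̂_i = min (r_i, r̂_{i+1} − 1)`. -/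
def hatMins (L : List ℤ) : List ℤ :=
  (L.foldl (fun (acc : List ℤ × Option ℤ) r =>
    let v := match acc.2 with
      | none => r
      | some p => min r (p - 1)
    (acc.1 ++ [v], some v)) ([], none)).1

/-- Build the weak composition with value `lens_i` in position `hs_i` and `0`
elsewhere. -/
def buildWeakComp (hs : List ℤ) (lens : List ℕ) : List ℕ :=
  (List.range (hs.headD 0).toNat).map (fun p =>
    match (hs.zip lens).find? (fun q => decide (q.1 = (p : ℤ) + 1)) with
    | some q => q.2
    | none => 0)

/-- The weak descent composition determined by the minima and lengths of the runs
(topmost run first); `none` means virtual. -/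
def desFromBlocks (mins : List ℤ) (lens : List ℕ) : Option (List ℕ) :=
  let hs := hatMins mins
  if hs = [] then some []
  else if hs.getLastD 0 ≤ 0 then none
  else some (buildWeakComp hs lens)

/-- The weak descent composition `des(ρ)` of a word; `none` means `ρ` is virtual. -/
def desWord (ρ : List ℕ) : Option (List ℕ) :=
  desFromBlocks ((runs ρ).map (fun r => ((r.headD 0 : ℕ) : ℤ)))
    ((runs ρ).map List.length)

/-- Prefix-sum dominance of weak compositions: `domLe a b` means
`a_1 + ⋯ + a_k ≤ b_1 + ⋯ + b_k` for all `k` (i.e. `b ≥ a`). -/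
def domLe (a b : List ℕ) : Prop := ∀ k, ((a.take k).sum ≤ (b.take k).sum)

/-- A reduced word is Yamanouchi if it is non-virtual and its weak descent
composition is dominated by that of every non-virtual Coxeter–Knuth equivalent word. -/
def IsYam (ρ : List ℕ) : Prop :=
  IsReducedWord ρ ∧ ∃ d, desWord ρ = some d ∧
    ∀ σ e, CKEquiv ρ σ → desWord σ = some e → domLe d e

/-! ## Quasisymmetric functions, slide polynomials, and generating functions.

We model formal power series in variables `x_1, x_2, …` (indexed by `ℕ`, with
variable `i` standing for `x_{i+1}`) as functions `(ℕ →₀ ℕ) → ℤ` recording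
coefficients of monomials. -/

/-- `β` refines `α`: `β` splits into consecutive blocks with sums the parts of `α`. -/
def Refines (β α : List ℕ) : Prop :=
  ∃ blocks : List (List ℕ), blocks.flatten = β ∧
    List.Forall₂ (fun blk a => blk.sum = a) blocks α

/-- The flattening of a weak composition given as a finitely supported exponent
vector: the list of its nonzero values, in order. -/
def flatOf (b : ℕ →₀ ℕ) : List ℕ :=
  ((List.range (b.support.sup id + 1)).map b).filter (fun x => decide (x ≠ 0))

open Classical in
/-- The fundamental quasisymmetric function `F_α`. -/
noncomputable def Fqs (α : List ℕ) : (ℕ →₀ ℕ) → ℤ :=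
  fun b => if Refines (flatOf b) α then 1 else 0

open Classical in
/-- The fundamental slide polynomial `𝔉_a` of a weak composition `a`. -/
noncomputable def FSlide (a : List ℕ) : (ℕ →₀ ℕ) → ℤ :=
  fun b =>
    if (∀ i, a.length ≤ i → b i = 0) ∧
       (∀ k, (a.take k).sum ≤ ∑ i ∈ Finset.range k, b i) ∧
       Refines (flatOf b) (a.filter (fun x => decide (x ≠ 0))) then 1 else 0

/-- `𝔉` extended to virtual indices by `𝔉_∅ = 0`. -/
noncomputable def FSlideO : Option (List ℕ) → (ℕ →₀ ℕ) → ℤ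
  | none => 0
  | some a => FSlide a

/-- The Stanley symmetric function `S_w`. -/
noncomputable def StanleySym (w : Equiv.Perm ℕ) : (ℕ →₀ ℕ) → ℤ :=
  ∑ᶠ ρ ∈ {ρ : List ℕ | ReducedWordFor ρ w}, Fqs (DesComp ρ)

/-- The Schubert polynomial `𝔖_w`. -/
noncomputable def Schubert (w : Equiv.Perm ℕ) : (ℕ →₀ ℕ) → ℤ :=
  ∑ᶠ ρ ∈ {ρ : List ℕ | ReducedWordFor ρ w}, FSlideO (desWord ρ)

/-! ## Standard Young tableaux and Schur functions. -/

/-- The (bottom-to-top) row index of the row of `T` containing the entry `e`. -/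
def rowOf (T : List (List ℕ)) (e : ℕ) : ℕ := T.findIdx (fun r => r.contains e)

/-- The column index of the entry `e` in `T`. -/
def colOf (T : List (List ℕ)) (e : ℕ) : ℕ :=
  (T.getD (rowOf T e) []).findIdx (fun z => z == e)

/-- `T` (rows listed bottom to top) is a standard Young tableau. -/
def IsSYT (T : List (List ℕ)) : Prop :=
  (∀ r ∈ T, r.Chain' (· < ·)) ∧
    T.Chain' (fun lo hi => hi.length ≤ lo.length ∧
      ∀ j < hi.length, lo.getD j 0 < hi.getD j 0) ∧
    [] ∉ T ∧
    T.flatten.Perm (List.range' 1 T.flatten.length)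

/-- The descent composition of a standard Young tableau: `i` is a descent when
`i+1` lies weakly left of `i`. -/
def sytDes (T : List (List ℕ)) : List ℕ :=
  (splitWhen (fun a _ => decide (colOf T (a + 1) ≤ colOf T a))
    (List.range' 1 T.flatten.length)).map List.length

/-- The Schur function `s_λ`, for a partition `λ` given as the list of row lengths
bottom to top. -/
noncomputable def Schur (lam : List ℕ) : (ℕ →₀ ℕ) → ℤ :=
  ∑ᶠ T ∈ {T : List (List ℕ) | IsSYT T ∧ T.map List.length = lam}, Fqs (sytDes T)

/-! ## Standard key tableaux and Demazure characters. -/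

/-- `T` is a standard key tableau of shape the weak composition `a`: rows (listed
bottom to top, with row `i` of length `a_i`, possibly `0`) strictly decrease left to
right, the entries are `1, …, |a|`, and whenever an entry `i` lies above an entry
`k` in the same column with `i < k`, some entry `j` right of `k` satisfies `i < j`. -/
def IsSKT (a : List ℕ) (T : List (List ℕ)) : Prop :=
  T.map List.length = a ∧
    (∀ r ∈ T, r.Chain' (· > ·)) ∧
    T.flatten.Perm (List.range' 1 a.sum) ∧
    ∀ lo hi, lo < hi → hi < T.length →
      ∀ c, c < (T.getD hi []).length → c < (T.getD lo []).length →
        (T.getD hi []).getD c 0 < (T.getD lo []).getD c 0 →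
        ∃ c', c < c' ∧ c' < (T.getD lo []).length ∧
          (T.getD hi []).getD c 0 < (T.getD lo []).getD c' 0

/-- The runs of the word `n ⋯ 2 1` determined by the descents of a standard key
tableau `T` (where `i` is a descent when `i+1` lies weakly right of `i`). -/
def sktRuns (T : List (List ℕ)) : List (List ℕ) :=
  splitWhen (fun _ b => decide (colOf T b ≤ colOf T (b + 1)))
    ((List.range' 1 T.flatten.length).reverse)

/-- The minimal row (1-indexed from the bottom) among the cells of the entries of
`r` in `T`. -/
def minRow (T : List (List ℕ)) (r : List ℕ) : ℕ :=
  ((r.map (fun e => rowOf T e + 1)).min?).getD 0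

/-- The weak descent composition `des(T)` of a standard key tableau; `none` means
`T` is virtual. -/
def desSKT (T : List (List ℕ)) : Option (List ℕ) :=
  (desFromBlocks ((sktRuns T).map (fun r => ((minRow T r : ℕ) : ℤ)))
    ((sktRuns T).map List.length)).map
      (fun d => d ++ List.replicate (T.length - d.length) 0)

/-- The Demazure character (key polynomial) `κ_a`. -/
noncomputable def KeyPoly (a : List ℕ) : (ℕ →₀ ℕ) → ℤ :=
  ∑ᶠ T ∈ {T : List (List ℕ) | IsSKT a T}, FSlideO (desSKT T)

/-- `κ` extended to virtual indices by `κ_∅ = 0`. -/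
noncomputable def KeyPolyO : Option (List ℕ) → (ℕ →₀ ℕ) → ℤ
  | none => 0
  | some a => KeyPoly a

/-! ## Edelman–Greene insertion and weak insertion. -/

/-- Edelman–Greene insertion of `x` into a single row: either append `x`, or bump
the smallest entry exceeding `x` (suppressing the replacement when that entry is
`x+1` and `x` already occurs in the row). -/
def eginsRow (x : ℕ) (row : List ℕ) : List ℕ × Option ℕ :=
  match row.findIdx? (fun z => decide (x < z)) with
  | none => (row ++ [x], none)
  | some j =>
    let y := row.getD j 0
    (if y = x + 1 ∧ row.contains x then row else row.set j x, some y)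

/-- Edelman–Greene insertion of `x` into a tableau (rows bottom to top). -/
def egins : ℕ → List (List ℕ) → List (List ℕ)
  | x, [] => [[x]]
  | x, row :: rest =>
    match eginsRow x row with
    | (r, none) => r :: rest
    | (r, some y) => r :: egins y rest

/-- The Edelman–Greene insertion tableau `P(ρ)` of a word. -/
def PEG (ρ : List ℕ) : List (List ℕ) := ρ.foldl (fun P x => egins x P) []

/-- One sweep of all the maps `drop_i` on a tableau (rows bottom to top). -/
def sweepDropT (T : List (List ℕ)) : List (List ℕ) :=
  (List.range T.length).foldl (fun t i => dropAt (i + 1) t) T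

/-- The drop of a tableau: repeatedly drop until reaching the increasing Young
tableau of the class. -/
def dropCanon (T : List (List ℕ)) : List (List ℕ) :=
  sweepDropT^[T.flatten.length * T.length + 1] T

/-- Weak insertion of the letter `x` into a Yamanouchi key tableau `P`:
`lift (drop P ← x)`. -/
def winsert (x : ℕ) (P : List (List ℕ)) : List (List ℕ) :=
  liftCanon (egins x (dropCanon P))

/-- The weak insertion tableau `P̃(ρ)` (rows bottom to top). -/
def Pweak (ρ : List ℕ) : List (List ℕ) := ρ.foldl (fun P x => winsert x P) []

/-- The Yamanouchi word of the Coxeter–Knuth class of `ρ`: the row reading word of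
`P̃(ρ)`. -/
def yamWord (ρ : List ℕ) : List ℕ := wordOf (Pweak ρ)

/-- The shape (weak composition) of the weak insertion tableau of the first `m`
letters of `ρ`. -/
def shapeAt (ρ : List ℕ) (m : ℕ) : List ℕ :=
  (desWord (wordOf (Pweak (ρ.take m)))).getD []

/-- Append the entry `e` at the end of row `j` (0-indexed from the bottom),
extending with empty rows as needed. -/
def placeEntry (Q : List (List ℕ)) (j e : ℕ) : List (List ℕ) :=
  let Q' := Q ++ List.replicate (j + 1 - Q.length) []
  Q'.set j (Q'.getD j [] ++ [e])

/-- The (0-indexed) row in which the shape grows from `aold` to `anew`. -/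
def growRow (aold anew : List ℕ) : ℕ :=
  ((List.range anew.length).find?
    (fun j => decide (aold.getD j 0 ≠ anew.getD j 0))).getD 0

/-- The weak recording tableau `Q̃(ρ)`: entry `i` is placed in the cell where the
shape grows at the step inserting `ρ_i` (entries are placed in decreasing order). -/
def Qweak (ρ : List ℕ) : List (List ℕ) :=
  (List.range ρ.length).foldl (fun Q m =>
    placeEntry Q (growRow (shapeAt ρ m) (shapeAt ρ (m + 1))) (ρ.length - m)) []

/-! ## Elementary weak dual equivalence involutions. -/

/-- Column reading order on entries: by column, and bottom to top within a column. -/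
def colKeyLe (T : List (List ℕ)) (x y : ℕ) : Bool :=
  decide (colOf T x < colOf T y ∨ (colOf T x = colOf T y ∧ rowOf T x ≤ rowOf T y))

/-- Sort three values by a boolean order. -/
def sort3 (le : ℕ → ℕ → Bool) (a b c : ℕ) : ℕ × ℕ × ℕ :=
  if le a b then
    if le b c then (a, b, c) else if le a c then (a, c, b) else (c, a, b)
  else
    if le a c then (b, a, c) else if le b c then (b, c, a) else (c, b, a)

/-- Relabel the entries `x, y, z` of `T` as `x', y', z'` respectively. -/
def relabel3 (T : List (List ℕ)) (x y z x' y' z' : ℕ) : List (List ℕ) :=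
  T.map (List.map (fun t =>
    if t = x then x' else if t = y then y' else if t = z then z' else t))

/-- The elementary weak dual equivalence involution `d̃_i` on standard key tableaux:
with `u, v, w` the cells of `i−1, i, i+1` in column reading order, if `u` and `w`
share a row and `v` does not, cycle the three entries so that `i` shares a row with
`i ± 1`; else if `v` holds `i+1` swap `i−1, i`; else if `v` holds `i−1` swap
`i, i+1`; otherwise fix `T`. -/
def wde (i : ℕ) (T : List (List ℕ)) : List (List ℕ) :=
  let s := sort3 (colKeyLe T) (i - 1) i (i + 1)
  let u := s.1
  let v := s.2.1
  let w := s.2.2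
  if rowOf T u = rowOf T w ∧ rowOf T v ≠ rowOf T u then
    let T1 := relabel3 T u v w w u v
    let T2 := relabel3 T u v w v w u
    if rowOf T1 i = rowOf T1 (i - 1) ∨ rowOf T1 i = rowOf T1 (i + 1) then T1 else T2
  else if v = i + 1 then relabel3 T (i - 1) i (i + 1) i (i - 1) (i + 1)
  else if v = i - 1 then relabel3 T (i - 1) i (i + 1) (i - 1) (i + 1) i
  else T

/-- Remove trailing zero parts of a weak composition (two weak compositions are
identified when they differ only in trailing zeros). -/
def trimZeros (a : List ℕ) : List ℕ :=
  (a.reverse.dropWhile (fun x => x == 0)).reverse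

/-- The transposition `s_i` acting on compositions by interchanging the parts in
positions `i` and `i+1` (1-indexed). -/
def swapParts (i : ℕ) (c : List ℕ) : List ℕ :=
  if 1 ≤ i ∧ i < c.length then
    (c.set (i - 1) (c.getD i 0)).set i (c.getD (i - 1) 0)
  else c

end EG

/-!
For a reduced word `w`, let `M k` be the maximal length of a prefix with all letters above `k`,
taken over all words Coxeter–Knuth equivalent to `w`. The prefix sums of `des σ` are complementary
to the numbers of letters of `σ` before the first run with `r̂ᵢ ≤ k`. These numbers are at most
`M k`, so a word is Yamanouchi as soon as its first `M k` letters are above `k` for every `k`.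
Such *flag words* exist because a maximal prefix for the threshold `k` has, for thresholds above
`k`, the same maximal prefix lengths as `w`, which allows replacing it by a flag word of its own;
hence, conversely, every Yamanouchi word is a flag word.

For uniqueness, the column lengths of the Edelman–Greene tableau of a maximal prefix depend only on
`w` and `k`. The letters of a flag word between two successive maximal prefixes are increasing, and
boxes added by increasing letters form a horizontal strip, so that the insertion of these letters
can be undone as soon as the two shapes are known.
-/

namespace EG

/-! ### Coxeter–Knuth equivalence of integer words -/

section Equivalence

theorem eqvGen_lift {α β : Type*} {r : α → α → Prop} {s : β → β → Prop} (f : α → β)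
    (hf : ∀ a b, r a b → Relation.EqvGen s (f a) (f b)) {a b : α} (h : Relation.EqvGen r a b) :
    Relation.EqvGen s (f a) (f b) := by
  induction h with
  | rel a b h => exact hf a b h
  | refl a => exact .refl _
  | symm a b _ ih => exact .symm _ _ ih
  | trans a b c _ _ ihab ihbc => exact .trans _ _ _ ihab ihbc

theorem map_eq_of_eqvGen {α β : Type*} {r : α → α → Prop} (f : α → β)
    (hf : ∀ a b, r a b → f a = f b) {a b : α} (h : Relation.EqvGen r a b) : f a = f b :=
  eq_equivalence.eqvGen_iff.1 (eqvGen_lift f (fun a b h => .rel _ _ (hf a b h)) h)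

/-- The Coxeter–Knuth relations, each in one direction. Letters are integers rather than positive
naturals so that words may be negated letterwise. -/
inductive KnuthStep : List ℤ → List ℤ → Prop
  | witness_left (p s : List ℤ) {x y z : ℤ} (hxy : x < y) (hyz : y < z) :
      KnuthStep (p ++ y :: x :: z :: s) (p ++ y :: z :: x :: s)
  | witness_right (p s : List ℤ) {x y z : ℤ} (hxy : x < y) (hyz : y < z) :
      KnuthStep (p ++ x :: z :: y :: s) (p ++ z :: x :: y :: s)
  | braid (p s : List ℤ) (x : ℤ) :
      KnuthStep (p ++ x :: (x + 1) :: x :: s) (p ++ (x + 1) :: x :: (x + 1) :: s)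

/-- Coxeter–Knuth equivalence of integer words. -/
def KnuthEquiv : List ℤ → List ℤ → Prop := Relation.EqvGen KnuthStep

infix:50 " ≈ₖ " => KnuthEquiv

/-- The commutation and braid relations of the Coxeter generators `s_i`, `i ∈ ℤ`. -/
inductive CoxeterStep : List ℤ → List ℤ → Prop
  | comm (p s : List ℤ) {x y : ℤ} (h : x + 1 < y) :
      CoxeterStep (p ++ x :: y :: s) (p ++ y :: x :: s)
  | braid (p s : List ℤ) (x : ℤ) :
      CoxeterStep (p ++ x :: (x + 1) :: x :: s) (p ++ (x + 1) :: x :: (x + 1) :: s)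

/-- Equivalence of integer words under commutation and braid relations. -/
def CoxeterEquiv : List ℤ → List ℤ → Prop := Relation.EqvGen CoxeterStep

/-- Reducedness of integer words, in the only form in which it is needed: no word reached by
commutations and braids has two equal adjacent letters. -/
def Reduced (w : List ℤ) : Prop :=
  ∀ w', CoxeterEquiv w w' → ∀ p a s, w' ≠ p ++ a :: a :: s

variable {u v w w' : List ℤ}

theorem KnuthStep.equiv (h : KnuthStep w w') : w ≈ₖ w' := .rel _ _ h

namespace KnuthEquiv

theorem refl (w : List ℤ) : w ≈ₖ w := Relation.EqvGen.refl w

theorem symm (h : w ≈ₖ w') : w' ≈ₖ w := Relation.EqvGen.symm _ _ h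

theorem trans (h : u ≈ₖ v) (h' : v ≈ₖ w) : u ≈ₖ w := Relation.EqvGen.trans _ _ _ h h'

theorem append_append (p s : List ℤ) (h : w ≈ₖ w') : p ++ w ++ s ≈ₖ p ++ w' ++ s := by
  refine eqvGen_lift (fun w => p ++ w ++ s) (fun a b h => .rel _ _ ?_) h
  cases h with
  | witness_left q t hxy hyz =>
    simpa using KnuthStep.witness_left (p ++ q) (t ++ s) hxy hyz
  | witness_right q t hxy hyz =>
    simpa using KnuthStep.witness_right (p ++ q) (t ++ s) hxy hyz
  | braid q t x => simpa using KnuthStep.braid (p ++ q) (t ++ s) x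

theorem append_left (p : List ℤ) (h : w ≈ₖ w') : p ++ w ≈ₖ p ++ w' := by
  simpa using h.append_append p []

theorem append_right (s : List ℤ) (h : w ≈ₖ w') : w ++ s ≈ₖ w' ++ s := by
  simpa using h.append_append [] s

theorem cons (x : ℤ) (h : w ≈ₖ w') : x :: w ≈ₖ x :: w' := h.append_left [x]

theorem length_eq (h : w ≈ₖ w') : w.length = w'.length :=
  map_eq_of_eqvGen List.length (fun a b h => by cases h <;> simp) h

theorem mem_iff (h : w ≈ₖ w') (c : ℤ) : c ∈ w ↔ c ∈ w' :=
  iff_of_eq <| map_eq_of_eqvGen (c ∈ ·)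
    (fun a b h => by cases h <;> simp only [mem_append, mem_cons, eq_iff_iff] <;> tauto) h

theorem neg (h : w ≈ₖ w') : w.map Neg.neg ≈ₖ w'.map Neg.neg := by
  refine eqvGen_lift (List.map Neg.neg) (fun a b h => .symm _ _ (.rel _ _ ?_)) h
  cases h with
  | witness_left p s hxy hyz =>
    simpa using KnuthStep.witness_left (p.map Neg.neg) (s.map Neg.neg)
      (neg_lt_neg hyz) (neg_lt_neg hxy)
  | witness_right p s hxy hyz =>
    simpa using KnuthStep.witness_right (p.map Neg.neg) (s.map Neg.neg)
      (neg_lt_neg hyz) (neg_lt_neg hxy)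
  | braid p s x =>
    have := KnuthStep.braid (p.map Neg.neg) (s.map Neg.neg) (-(x + 1))
    rw [show -(x + 1) + 1 = -x by ring] at this
    simpa only [map_append, map_cons] using this

theorem reverse (h : w ≈ₖ w') : w.reverse ≈ₖ w'.reverse := by
  refine eqvGen_lift List.reverse (fun a b h => ?_) h
  cases h with
  | witness_left p s hxy hyz =>
    exact .symm _ _ (.rel _ _ (by simpa using KnuthStep.witness_right s.reverse p.reverse hxy hyz))
  | witness_right p s hxy hyz =>
    exact .symm _ _ (.rel _ _ (by simpa using KnuthStep.witness_left s.reverse p.reverse hxy hyz))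
  | braid p s x => exact .rel _ _ (by simpa using KnuthStep.braid s.reverse p.reverse x)

theorem coxeterEquiv (h : w ≈ₖ w') : CoxeterEquiv w w' := by
  refine eqvGen_lift id (fun a b h => .rel _ _ ?_) h
  cases h with
  | @witness_left p s x y z hxy hyz =>
    simpa using CoxeterStep.comm (p ++ [y]) s (show x + 1 < z by lia)
  | @witness_right p s x y z hxy hyz => exact .comm p (y :: s) (by lia)
  | braid p s x => exact .braid p s x

end KnuthEquiv

namespace CoxeterEquiv

theorem append_append (p s : List ℤ) (h : CoxeterEquiv w w') :
    CoxeterEquiv (p ++ w ++ s) (p ++ w' ++ s) := by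
  refine eqvGen_lift (fun w => p ++ w ++ s) (fun a b h => .rel _ _ ?_) h
  cases h with
  | comm q t h => simpa using CoxeterStep.comm (p ++ q) (t ++ s) h
  | braid q t x => simpa using CoxeterStep.braid (p ++ q) (t ++ s) x

theorem neg (h : CoxeterEquiv w w') : CoxeterEquiv (w.map Neg.neg) (w'.map Neg.neg) := by
  refine eqvGen_lift (List.map Neg.neg) (fun a b h => .symm _ _ (.rel _ _ ?_)) h
  cases h with
  | @comm p s x y h =>
    simpa using CoxeterStep.comm (p.map Neg.neg) (s.map Neg.neg) (show -y + 1 < -x by lia)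
  | braid p s x =>
    have := CoxeterStep.braid (p.map Neg.neg) (s.map Neg.neg) (-(x + 1))
    rw [show -(x + 1) + 1 = -x by ring] at this
    simpa only [map_append, map_cons] using this

theorem reverse (h : CoxeterEquiv w w') : CoxeterEquiv w.reverse w'.reverse := by
  refine eqvGen_lift List.reverse (fun a b h => ?_) h
  cases h with
  | comm p s h => exact .symm _ _ (.rel _ _ (by simpa using CoxeterStep.comm s.reverse p.reverse h))
  | braid p s x => exact .rel _ _ (by simpa using CoxeterStep.braid s.reverse p.reverse x)

end CoxeterEquiv

theorem not_reduced_append_cons_cons (p s : List ℤ) (a : ℤ) : ¬ Reduced (p ++ a :: a :: s) :=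
  fun h => h _ (.refl _) p a s rfl

namespace Reduced

theorem of_coxeterEquiv (h : Reduced w) (e : CoxeterEquiv w w') : Reduced w' :=
  fun v hv => h v (.trans _ _ _ e hv)

theorem of_knuthEquiv (h : Reduced w) (e : w ≈ₖ w') : Reduced w' :=
  h.of_coxeterEquiv e.coxeterEquiv

theorem of_append_append {p s : List ℤ} (h : Reduced (p ++ w ++ s)) : Reduced w := by
  rintro _ e q a t rfl
  exact h _ (e.append_append p s) (p ++ q) a (t ++ s) (by simp)

theorem of_append_left (h : Reduced (u ++ v)) : Reduced u :=
  of_append_append (p := []) (s := v) h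

theorem of_append_right (h : Reduced (u ++ v)) : Reduced v :=
  of_append_append (p := u) (s := []) (by simpa using h)

theorem of_cons {a : ℤ} (h : Reduced (a :: w)) : Reduced w :=
  of_append_right (u := [a]) h

theorem neg (h : Reduced w) : Reduced (w.map Neg.neg) := by
  rintro _ e p a s rfl
  exact h _ (by simpa using e.neg) (p.map Neg.neg) (-a) (s.map Neg.neg) rfl

theorem reverse (h : Reduced w) : Reduced w.reverse := by
  rintro _ e p a s rfl
  exact h _ (by simpa using e.reverse) s.reverse a p.reverse rfl

end Reduced

end Equivalence

/-! ### Insertion into a row -/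

/-- Edelman–Greene insertion of the letter `x` into an increasing row: the new row, together with
the bumped letter if there is one. -/
def rowInsert (x : ℤ) : List ℤ → List ℤ × Option ℤ
  | [] => ([x], none)
  | a :: r =>
    if x < a then (x :: r, some a)
    else if x = a then (a :: r, some (a + 1))
    else (a :: (rowInsert x r).1, (rowInsert x r).2)

section RowInsert

variable {x y z a : ℤ} {r : List ℤ}

theorem rowInsert_nil (x : ℤ) : rowInsert x [] = ([x], none) := rfl

theorem rowInsert_of_lt (r : List ℤ) (h : x < a) : rowInsert x (a :: r) = (x :: r, some a) := by
  simp [rowInsert, h]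

theorem rowInsert_of_eq (r : List ℤ) (h : x = a) :
    rowInsert x (a :: r) = (a :: r, some (a + 1)) := by
  simp [rowInsert, h]

theorem rowInsert_of_gt (r : List ℤ) (h : a < x) :
    rowInsert x (a :: r) = (a :: (rowInsert x r).1, (rowInsert x r).2) := by
  simp [rowInsert, h.not_gt, h.ne']

theorem mem_rowInsert_self (x : ℤ) (r : List ℤ) : x ∈ (rowInsert x r).1 := by
  fun_induction rowInsert x r <;> simp_all

theorem eq_or_mem_of_mem_rowInsert {c : ℤ} (h : c ∈ (rowInsert x r).1) : c = x ∨ c ∈ r := by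
  fun_induction rowInsert x r with
  | case1 => simpa using h
  | _ => grind

theorem pairwise_rowInsert (x : ℤ) (hr : r.Pairwise (· < ·)) :
    (rowInsert x r).1.Pairwise (· < ·) := by
  fun_induction rowInsert x r with
  | case1 => simp
  | case2 a r _ => grind [pairwise_cons]
  | case3 r _ => exact hr
  | case4 a r _ _ ih =>
    rw [pairwise_cons] at hr ⊢
    refine ⟨fun b hb => ?_, ih hr.2⟩
    rcases eq_or_mem_of_mem_rowInsert hb with rfl | hb
    · lia
    · exact hr.1 b hb

theorem lt_of_mem_bump (hz : z ∈ (rowInsert x r).2) : x < z := by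
  fun_induction rowInsert x r <;> grind

theorem mem_or_sub_one_mem_of_mem_bump (hz : z ∈ (rowInsert x r).2) : z ∈ r ∨ z - 1 ∈ r := by
  fun_induction rowInsert x r <;> grind

theorem lt_bump_of_forall_lt (ha : ∀ e ∈ r, a < e) (hz : z ∈ (rowInsert x r).2) : a < z := by
  grind [mem_or_sub_one_mem_of_mem_bump hz]

theorem exists_bump_le (hr : r.Pairwise (· < ·)) {e : ℤ} (he : e ∈ r) (hx : x < e) :
    ∃ z ∈ (rowInsert x r).2, z ≤ e := by
  fun_induction rowInsert x r with
  | case1 => simp at he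
  | case2 a r _ => exact ⟨a, rfl, by grind [pairwise_cons]⟩
  | case3 r _ => exact ⟨x + 1, rfl, hx⟩
  | case4 a r _ _ ih => exact ih hr.of_cons ((mem_cons.1 he).resolve_left (by lia))

theorem rowInsert_eq_of_bump_eq_none (h : (rowInsert x r).2 = none) :
    (rowInsert x r).1 = r ++ [x] := by
  fun_induction rowInsert x r <;> simp_all

theorem rowInsert_of_forall_lt (h : ∀ e ∈ r, e < x) : rowInsert x r = (r ++ [x], none) := by
  fun_induction rowInsert x r with
  | case1 => rfl
  | _ => grind [mem_cons_self]

theorem length_rowInsert (x : ℤ) (r : List ℤ) :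
    (rowInsert x r).1.length + (rowInsert x r).2.toList.length = r.length + 1 := by
  fun_induction rowInsert x r <;> grind

theorem countP_le_rowInsert {k : ℤ} (hk : k < x) (r : List ℤ) :
    (rowInsert x r).1.countP (· ≤ k) = r.countP (· ≤ k) := by
  fun_induction rowInsert x r <;> grind

theorem exists_bump_lt_of_mem_bump (hyz : y < z) (hr : r.Pairwise (· < ·)) {z' : ℤ}
    (hz : z' ∈ (rowInsert z (rowInsert y r).1).2) : ∃ y' ∈ (rowInsert y r).2, y' < z' := by
  fun_induction rowInsert y r with
  | case1 => simp [rowInsert_of_gt [] hyz, rowInsert_nil] at hz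
  | case2 a r _ =>
    rw [rowInsert_of_gt _ hyz] at hz
    exact ⟨a, rfl, lt_bump_of_forall_lt (pairwise_cons.1 hr).1 hz⟩
  | case3 r _ =>
    rw [rowInsert_of_gt _ hyz] at hz
    exact ⟨y + 1, rfl, by linarith [lt_of_mem_bump hz]⟩
  | case4 a r h h' ih =>
    rw [rowInsert_of_gt _ (by lia)] at hz
    exact ih hr.of_cons hz

theorem knuthEquiv_move_lt_head (h : x < a) (hr : (a :: r).Pairwise (· < ·)) :
    a :: r ++ [x] ≈ₖ a :: x :: r := by
  induction r generalizing a with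
  | nil => exact .refl _
  | cons b r ih =>
    have hab : a < b := (pairwise_cons.1 hr).1 b mem_cons_self
    have move := (ih (h.trans hab) hr.of_cons).cons a
    exact move.trans (KnuthStep.witness_left [] r h hab).equiv.symm

theorem exists_eq_succ_cons_of_reduced (hr : (a :: r).Pairwise (· < ·))
    (h : Reduced (a :: r ++ [a])) : ∃ r', r = (a + 1) :: r' := by
  cases r with
  | nil => exact absurd h (not_reduced_append_cons_cons [] [] a)
  | cons b r =>
    have hab : a < b := (pairwise_cons.1 hr).1 b mem_cons_self
    obtain rfl | hb := eq_or_ne b (a + 1)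
    · exact ⟨r, rfl⟩
    have moved : Reduced (a :: b :: a :: r) :=
      h.of_knuthEquiv ((knuthEquiv_move_lt_head hab hr.of_cons).cons a)
    have swap : CoxeterEquiv (a :: b :: a :: r) (a :: a :: b :: r) :=
      .symm _ _ (.rel _ _ (.comm [a] r (by lia)))
    exact absurd (moved.of_coxeterEquiv swap) (not_reduced_append_cons_cons [] (b :: r) a)

theorem exists_rowInsert_eq_cons_le (hr : r.Pairwise (· < ·)) (x : ℤ) :
    ∃ b t, (rowInsert x r).1 = b :: t ∧ b ≤ x := by
  fun_induction rowInsert x r <;> grind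

theorem knuthEquiv_rowInsert (hr : r.Pairwise (· < ·)) (h : Reduced (r ++ [x])) :
    r ++ [x] ≈ₖ (rowInsert x r).2.toList ++ (rowInsert x r).1 := by
  induction r with
  | nil => exact .refl _
  | cons a r ih =>
    rcases lt_trichotomy x a with hxa | rfl | hax
    · rw [rowInsert_of_lt r hxa]
      exact knuthEquiv_move_lt_head hxa hr
    · rw [rowInsert_of_eq r rfl]
      obtain ⟨r, rfl⟩ := exists_eq_succ_cons_of_reduced hr h
      exact ((knuthEquiv_move_lt_head (lt_add_one x) hr.of_cons).cons x).trans
        (KnuthStep.braid [] r x).equiv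
    · rw [rowInsert_of_gt r hax]
      refine ((ih hr.of_cons h.of_cons).cons a).trans ?_
      obtain ⟨b, t, hbt, hbx⟩ := exists_rowInsert_eq_cons_le hr.of_cons x
      have hab : a < b := by
        have hb : b ∈ (rowInsert x r).1 := by simp [hbt]
        rcases eq_or_mem_of_mem_rowInsert hb with rfl | hb
        exacts [hax, (pairwise_cons.1 hr).1 b hb]
      cases hz : (rowInsert x r).2 with
      | none => exact .refl _
      | some z =>
        have hbz : b < z := hbx.trans_lt (lt_of_mem_bump hz)
        simpa [hbt] using (KnuthStep.witness_right [] t hab hbz).equiv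

theorem le_of_mem_rowInsert_of_lt_bump (hr : r.Pairwise (· < ·)) {c : ℤ}
    (hz : z ∈ (rowInsert x r).2) (hc : c ∈ (rowInsert x r).1) (hcz : c < z) : c ≤ x := by
  fun_induction rowInsert x r <;> grind [pairwise_cons]

theorem eq_reverse_bump (hr : r.Pairwise (· < ·)) (h : Reduced (r ++ [x]))
    (hz : z ∈ (rowInsert x r).2) :
    r = if z ∈ (rowInsert x r).1 then (rowInsert x r).1
      else (rowInsert x r).1.map fun c => if c = x then z else c := by
  induction r with
  | nil => simp [rowInsert] at hz
  | cons a r ih =>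
    rcases lt_trichotomy x a with hxa | rfl | hax
    · have hr' := pairwise_cons.1 hr
      rw [rowInsert_of_lt r hxa] at hz ⊢
      obtain rfl : a = z := by simpa using hz
      have hmap : r.map (fun c => if c = x then a else c) = r :=
        (map_congr_left fun c hc => if_neg (hxa.trans (hr'.1 c hc)).ne').trans (map_id r)
      have har : a ∉ x :: r := by grind
      simp [har, hmap]
    · rw [rowInsert_of_eq r rfl] at hz ⊢
      obtain rfl : x + 1 = z := by simpa using hz
      obtain ⟨r, rfl⟩ := exists_eq_succ_cons_of_reduced hr h
      simp
    · have hxz := lt_of_mem_bump hz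
      rw [rowInsert_of_gt r hax] at hz ⊢
      have ih := ih hr.of_cons h.of_cons hz
      have haz : z ≠ a := by lia
      by_cases hzr : z ∈ (rowInsert x r).1
      · rw [if_pos hzr] at ih
        simpa [hzr] using ih
      · rw [if_neg hzr] at ih
        simp [hzr, haz, hax.ne, ← ih]

theorem rowInsert_injective {r' : List ℤ} {x' : ℤ} (hr : r.Pairwise (· < ·))
    (hr' : r'.Pairwise (· < ·)) (h : Reduced (r ++ [x])) (h' : Reduced (r' ++ [x']))
    (hrow : (rowInsert x r).1 = (rowInsert x' r').1) (hz : z ∈ (rowInsert x r).2)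
    (hz' : z ∈ (rowInsert x' r').2) : r = r' ∧ x = x' := by
  obtain rfl : x = x' := le_antisymm
    (le_of_mem_rowInsert_of_lt_bump hr' hz' (hrow ▸ mem_rowInsert_self x r) (lt_of_mem_bump hz))
    (le_of_mem_rowInsert_of_lt_bump hr hz (hrow ▸ mem_rowInsert_self x' r') (lt_of_mem_bump hz'))
  exact ⟨by rw [eq_reverse_bump hr h hz, eq_reverse_bump hr' h' hz', hrow], rfl⟩

end RowInsert

/-- Successive insertion of the letters of a word into a row: the word of bumped letters, in the
order in which they are bumped, and the final row. -/
def insertWord : List ℤ → List ℤ → List ℤ × List ℤ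
  | [], r => ([], r)
  | x :: s, r =>
    ((rowInsert x r).2.toList ++ (insertWord s (rowInsert x r).1).1,
      (insertWord s (rowInsert x r).1).2)

section InsertWord

variable {r s : List ℤ}

theorem insertWord_append (s t r : List ℤ) : insertWord (s ++ t) r =
    ((insertWord s r).1 ++ (insertWord t (insertWord s r).2).1,
      (insertWord t (insertWord s r).2).2) := by
  induction s generalizing r with
  | nil => rfl
  | cons x s ih => simp [insertWord, ih]

theorem insertWord_cons_of_forall_lt {a : ℤ} (h : ∀ c ∈ s, a < c) (r : List ℤ) :
    insertWord s (a :: r) = ((insertWord s r).1, a :: (insertWord s r).2) := by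
  induction s generalizing r with
  | nil => rfl
  | cons x s ih =>
    rw [forall_mem_cons] at h
    simp only [insertWord, rowInsert_of_gt r h.1, ih h.2]

theorem pairwise_insertWord (s : List ℤ) (hr : r.Pairwise (· < ·)) :
    (insertWord s r).2.Pairwise (· < ·) := by
  induction s generalizing r with
  | nil => exact hr
  | cons x _ ih => exact ih (pairwise_rowInsert x hr)

/-- The words `l` and `l'` have the same effect when inserted into the row `r`, up to
Coxeter–Knuth equivalence of the bumped words. -/
def InsertAlike (r l l' : List ℤ) : Prop :=
  (insertWord l r).2 = (insertWord l' r).2 ∧ (insertWord l r).1 ≈ₖ (insertWord l' r).1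

theorem InsertAlike.cons {l l' : List ℤ} (h : InsertAlike r l l') {a : ℤ}
    (hl : ∀ c ∈ l, a < c) (hl' : ∀ c ∈ l', a < c) : InsertAlike (a :: r) l l' := by
  rw [InsertAlike, insertWord_cons_of_forall_lt hl, insertWord_cons_of_forall_lt hl']
  exact ⟨congrArg (a :: ·) h.1, h.2⟩

theorem knuthEquiv_bump_lt {o o' : Option ℤ} {c : ℤ} (ho : ∀ y ∈ o, c < y)
    (ho' : ∀ z ∈ o', ∃ y ∈ o, y < z) :
    o.toList ++ c :: o'.toList ≈ₖ o.toList ++ (o'.toList ++ [c]) := by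
  cases o' with
  | none => exact .refl _
  | some z =>
    obtain ⟨y, rfl, hyz⟩ := ho' z rfl
    exact (KnuthStep.witness_left [] [] (ho y rfl) hyz).equiv

theorem knuthEquiv_lt_bump {o : Option ℤ} {c y : ℤ} (hcy : c < y) (ho : ∀ z ∈ o, y < z) :
    c :: (o.toList ++ [y]) ≈ₖ o.toList ++ [c, y] := by
  cases o with
  | none => exact .refl _
  | some z => exact (KnuthStep.witness_right [] [] hcy (ho z rfl)).equiv

theorem insertAlike_witness_left {x y z : ℤ} (hxy : x < y) (hyz : y < z)
    (hr : r.Pairwise (· < ·)) : InsertAlike r [y, x, z] [y, z, x] := by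
  induction r with
  | nil =>
    simp (disch := lia) only [InsertAlike, insertWord, rowInsert_nil, rowInsert_of_lt,
      rowInsert_of_gt]
    exact ⟨trivial, .refl _⟩
  | cons a r ih =>
    have har := (pairwise_cons.1 hr).1
    have hbump : ∀ z' ∈ (rowInsert z (rowInsert y r).1).2, ∃ y' ∈ (rowInsert y r).2, y' < z' :=
      fun _ => exists_bump_lt_of_mem_bump hyz hr.of_cons
    have hybump : ∀ y' ∈ (rowInsert y r).2, y < y' := fun _ => lt_of_mem_bump
    rcases lt_trichotomy a x with hax | rfl | hxa
    · exact (ih hr.of_cons).cons (by grind) (by grind)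
    · simp (disch := lia) only [InsertAlike, insertWord, rowInsert_of_gt, rowInsert_of_eq]
      refine ⟨trivial, ?_⟩
      simpa using knuthEquiv_bump_lt (c := a + 1) (by grind) hbump
    rcases lt_trichotomy y a with hya | rfl | hay
    · simp (disch := lia) only [InsertAlike, insertWord, rowInsert_of_lt, rowInsert_of_gt]
      refine ⟨trivial, ?_⟩
      simpa using knuthEquiv_bump_lt (o := some a) (o' := (rowInsert z r).2) (by simpa)
        fun z' hz => ⟨a, rfl, lt_bump_of_forall_lt har hz⟩
    · simp (disch := lia) only [InsertAlike, insertWord, rowInsert_of_lt, rowInsert_of_gt,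
        rowInsert_of_eq]
      refine ⟨trivial, ?_⟩
      simpa using knuthEquiv_bump_lt (o := some (y + 1)) (o' := (rowInsert z r).2) (c := y)
        (by simp) fun z' hz => ⟨y + 1, rfl, by linarith [lt_of_mem_bump hz]⟩
    · simp (disch := lia) only [InsertAlike, insertWord, rowInsert_of_lt, rowInsert_of_gt]
      refine ⟨trivial, ?_⟩
      simpa using knuthEquiv_bump_lt (c := a) (by grind) hbump

theorem insertAlike_witness_right_of_forall_lt {x y z : ℤ} (hxy : x < y) (hyz : y < z)
    (hr : r.Pairwise (· < ·)) (hz : ∀ e ∈ r, z < e) : InsertAlike r [x, z, y] [z, x, y] := by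
  rcases r with - | ⟨a, - | ⟨b, t⟩⟩
  · simp (disch := lia) only [InsertAlike, insertWord, rowInsert_nil, rowInsert_of_lt,
      rowInsert_of_gt]
    exact ⟨trivial, .refl _⟩
  · have hza : z < a := hz a mem_cons_self
    simp (disch := lia) only [InsertAlike, insertWord, rowInsert_nil, rowInsert_of_lt,
      rowInsert_of_gt]
    exact ⟨trivial, .refl _⟩
  · have hza : z < a := hz a mem_cons_self
    have hab : a < b := (pairwise_cons.1 hr).1 b mem_cons_self
    simp (disch := lia) only [InsertAlike, insertWord, rowInsert_of_lt, rowInsert_of_gt]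
    exact ⟨trivial, (KnuthStep.witness_left [] [] hza hab).equiv.symm⟩

theorem insertAlike_witness_right {x y z : ℤ} (hxy : x < y) (hyz : y < z)
    (hr : r.Pairwise (· < ·)) (hd : Reduced (r ++ [z, x, y])) :
    InsertAlike r [x, z, y] [z, x, y] := by
  induction r with
  | nil => exact insertAlike_witness_right_of_forall_lt hxy hyz hr (by simp)
  | cons a r ih =>
    have har := (pairwise_cons.1 hr).1
    obtain ⟨y', hy', hy'z⟩ : ∃ y' ∈ (rowInsert y (rowInsert z r).1).2, y' ≤ z :=
      exists_bump_le (pairwise_rowInsert z hr.of_cons) (mem_rowInsert_self z r) hyz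
    have hzbump : ∀ z' ∈ (rowInsert z r).2, y' < z' :=
      fun z' hz => hy'z.trans_lt (lt_of_mem_bump hz)
    rcases lt_trichotomy a x with hax | rfl | hxa
    · exact (ih hr.of_cons hd.of_cons).cons (by grind) (by grind)
    · simp (disch := lia) only [InsertAlike, insertWord, rowInsert_of_gt, rowInsert_of_eq,
        Option.mem_def.1 hy']
      refine ⟨trivial, ?_⟩
      simpa using knuthEquiv_lt_bump (c := a + 1) (by linarith [lt_of_mem_bump hy']) hzbump
    rcases lt_trichotomy z a with hza | rfl | haz
    · exact insertAlike_witness_right_of_forall_lt hxy hyz hr (by grind)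
    · obtain ⟨t, rfl⟩ := exists_eq_succ_cons_of_reduced hr
        (Reduced.of_append_left (v := [x, y]) (by simpa using hd))
      simp (disch := lia) only [InsertAlike, insertWord, rowInsert_of_lt, rowInsert_of_gt,
        rowInsert_of_eq]
      exact ⟨trivial, (KnuthStep.braid [] [] z).equiv⟩
    · simp (disch := lia) only [InsertAlike, insertWord, rowInsert_of_lt, rowInsert_of_gt,
        Option.mem_def.1 hy']
      have hay' : a < y' := lt_bump_of_forall_lt
        (fun c hc => (eq_or_mem_of_mem_rowInsert hc).elim (fun h => h ▸ haz) (har c)) hy'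
      refine ⟨trivial, ?_⟩
      simpa using knuthEquiv_lt_bump hay' hzbump

theorem insertAlike_braid (x : ℤ) (hr : r.Pairwise (· < ·)) (hd : Reduced (r ++ [x, x + 1, x]))
    (hd' : Reduced (r ++ [x + 1, x, x + 1])) :
    InsertAlike r [x, x + 1, x] [x + 1, x, x + 1] := by
  induction r with
  | nil =>
    simp (disch := lia) only [InsertAlike, insertWord, rowInsert_nil, rowInsert_of_lt,
      rowInsert_of_gt, rowInsert_of_eq]
    exact ⟨trivial, .refl _⟩
  | cons a r ih =>
    rcases lt_trichotomy a x with hax | rfl | hxa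
    · exact (ih hr.of_cons hd.of_cons hd'.of_cons).cons (by grind) (by grind)
    · obtain ⟨t, rfl⟩ := exists_eq_succ_cons_of_reduced hr
        (Reduced.of_append_left (v := [a + 1, a]) (by simpa using hd))
      simp (disch := lia) only [InsertAlike, insertWord, rowInsert_of_gt, rowInsert_of_eq]
      exact ⟨trivial, (KnuthStep.braid [] [] (a + 1)).equiv⟩
    obtain rfl | ha := eq_or_ne a (x + 1)
    · obtain ⟨t, rfl⟩ := exists_eq_succ_cons_of_reduced hr
        (Reduced.of_append_left (v := [x, x + 1]) (by simpa using hd'))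
      simp (disch := lia) only [InsertAlike, insertWord, rowInsert_of_lt, rowInsert_of_gt,
        rowInsert_of_eq]
      exact ⟨trivial, (KnuthStep.braid [] [] (x + 1)).equiv⟩
    cases r with
    | nil =>
      simp (disch := lia) only [InsertAlike, insertWord, rowInsert_nil, rowInsert_of_lt,
        rowInsert_of_gt, rowInsert_of_eq]
      exact ⟨trivial, .refl _⟩
    | cons b t =>
      have hab : a < b := (pairwise_cons.1 hr).1 b mem_cons_self
      have hxa' : x + 1 < a := by lia
      simp (disch := lia) only [InsertAlike, insertWord, rowInsert_of_lt, rowInsert_of_gt,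
        rowInsert_of_eq]
      exact ⟨trivial, (KnuthStep.witness_left [] [] hxa' hab).equiv.symm⟩

theorem length_le_length_insertWord (s r : List ℤ) : r.length ≤ (insertWord s r).2.length := by
  induction s generalizing r with
  | nil => exact le_rfl
  | cons x s ih =>
    have hrow := length_rowInsert x r
    have hbump : (rowInsert x r).2.toList.length ≤ 1 := by cases (rowInsert x r).2 <;> simp
    exact le_trans (by lia) (ih (rowInsert x r).1)

theorem insertWord_of_pairwise_append (h : (r ++ s).Pairwise (· < ·)) :
    insertWord s r = ([], r ++ s) := by
  induction s generalizing r with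
  | nil => simp [insertWord]
  | cons x s ih =>
    have hx : ∀ e ∈ r, e < x := fun e he => (pairwise_append.1 h).2.2 e he x mem_cons_self
    have h' : (r ++ [x] ++ s).Pairwise (· < ·) := by simpa using h
    simp [insertWord, rowInsert_of_forall_lt hx, ih h']

theorem mem_rowInsert_of_lt {x y : ℤ} (hx : x ∈ r) (h : x < y) : x ∈ (rowInsert y r).1 := by
  fun_induction rowInsert y r <;> grind

theorem mem_insertWord_of_forall_lt {x : ℤ} (hx : x ∈ r) (h : ∀ y ∈ s, x < y) :
    x ∈ (insertWord s r).2 := by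
  induction s generalizing r with
  | nil => exact hx
  | cons y s ih =>
    rw [forall_mem_cons] at h
    exact ih (mem_rowInsert_of_lt hx h.1) h.2

theorem subset_insertWord (hs : s.Pairwise (· < ·)) (r : List ℤ) : s ⊆ (insertWord s r).2 := by
  induction s generalizing r with
  | nil => exact nil_subset _
  | cons y s ih =>
    rw [pairwise_cons] at hs
    rw [insertWord]
    exact cons_subset.2 ⟨mem_insertWord_of_forall_lt (mem_rowInsert_self y r) hs.1,
      ih hs.2 (rowInsert y r).1⟩

theorem countP_le_insertWord {k : ℤ} (h : ∀ x ∈ s, k < x) (r : List ℤ) :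
    (insertWord s r).2.countP (· ≤ k) = r.countP (· ≤ k) := by
  induction s generalizing r with
  | nil => rfl
  | cons y s ih =>
    rw [forall_mem_cons] at h
    exact (ih h.2 _).trans (countP_le_rowInsert h.1 r)

end InsertWord

/-! ### The insertion tableau -/

section Tableau

/-- The first row of the Edelman–Greene insertion tableau of a word. -/
def firstRow (w : List ℤ) : List ℤ := (insertWord w []).2

/-- The word of letters bumped out of the first row; inserting it yields the rest of the
Edelman–Greene tableau. -/
def bumped (w : List ℤ) : List ℤ := (insertWord w []).1

variable {u v w w' : List ℤ}

theorem pairwise_firstRow (w : List ℤ) : (firstRow w).Pairwise (· < ·) :=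
  pairwise_insertWord w .nil

theorem bumped_append (u v : List ℤ) :
    bumped (u ++ v) = bumped u ++ (insertWord v (firstRow u)).1 := by
  simp [bumped, firstRow, insertWord_append]

theorem firstRow_append (u v : List ℤ) :
    firstRow (u ++ v) = (insertWord v (firstRow u)).2 := by
  simp [firstRow, insertWord_append]

theorem bumped_append_singleton (w : List ℤ) (x : ℤ) :
    bumped (w ++ [x]) = bumped w ++ (rowInsert x (firstRow w)).2.toList := by
  simp [bumped_append, insertWord]

theorem firstRow_append_singleton (w : List ℤ) (x : ℤ) :
    firstRow (w ++ [x]) = (rowInsert x (firstRow w)).1 := by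
  simp [firstRow_append, insertWord]

theorem length_bumped_add (w : List ℤ) :
    (bumped w).length + (firstRow w).length = w.length := by
  induction w using List.reverseRecOn with
  | nil => rfl
  | append_singleton w x ih =>
    have := length_rowInsert x (firstRow w)
    simp only [bumped_append_singleton, firstRow_append_singleton, length_append, length_singleton]
    lia

theorem Reduced.knuthEquiv_bumped (h : Reduced w) : w ≈ₖ bumped w ++ firstRow w := by
  induction w using List.reverseRecOn with
  | nil => exact .refl _
  | append_singleton w x ih =>
    have e : w ++ [x] ≈ₖ bumped w ++ (firstRow w ++ [x]) := by
      simpa using (ih h.of_append_left).append_right [x]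
    have hx : Reduced (firstRow w ++ [x]) := (h.of_knuthEquiv e).of_append_right
    rw [bumped_append_singleton, firstRow_append_singleton, append_assoc]
    exact e.trans ((knuthEquiv_rowInsert (pairwise_firstRow w) hx).append_left _)

protected theorem Reduced.firstRow_append {l : List ℤ} (h : Reduced (u ++ l)) :
    Reduced (firstRow u ++ l) := by
  have e := h.of_append_left.knuthEquiv_bumped.append_right l
  rw [append_assoc] at e
  exact (h.of_knuthEquiv e).of_append_right

theorem InsertAlike.append_append {p l l' : List ℤ} (h : InsertAlike (firstRow p) l l')
    (s : List ℤ) :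
    firstRow (p ++ l ++ s) = firstRow (p ++ l' ++ s) ∧
      bumped (p ++ l ++ s) ≈ₖ bumped (p ++ l' ++ s) := by
  have e : firstRow (p ++ l) = firstRow (p ++ l') := by
    rw [firstRow_append, firstRow_append, h.1]
  rw [firstRow_append (p ++ l), bumped_append (p ++ l), e, ← firstRow_append,
    bumped_append (p ++ l'), bumped_append, bumped_append]
  exact ⟨rfl, (h.2.append_left _).append_right _⟩

theorem KnuthStep.firstRow_eq_and_bumped (h : KnuthStep w w') (hw : Reduced w) :
    firstRow w = firstRow w' ∧ bumped w ≈ₖ bumped w' := by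
  have hw' := hw.of_knuthEquiv h.equiv
  have reduced (p l s : List ℤ) (h : Reduced (p ++ l ++ s)) : Reduced (firstRow p ++ l) :=
    h.of_append_left.firstRow_append
  cases h with
  | witness_left p s hxy hyz =>
    simpa using (insertAlike_witness_left hxy hyz (pairwise_firstRow p)).append_append s
  | witness_right p s hxy hyz =>
    simpa using (insertAlike_witness_right hxy hyz (pairwise_firstRow p)
      (reduced p _ s (by simpa using hw'))).append_append s
  | braid p s x =>
    simpa using (insertAlike_braid x (pairwise_firstRow p) (reduced p _ s (by simpa using hw))
      (reduced p _ s (by simpa using hw'))).append_append s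

theorem KnuthEquiv.firstRow_eq_and_bumped (h : w ≈ₖ w') (hw : Reduced w) :
    firstRow w = firstRow w' ∧ bumped w ≈ₖ bumped w' := by
  induction h with
  | rel a b h => exact h.firstRow_eq_and_bumped hw
  | refl a => exact ⟨rfl, .refl _⟩
  | symm a b h ih =>
    obtain ⟨hrow, hbumped⟩ := ih (hw.of_knuthEquiv (KnuthEquiv.symm h))
    exact ⟨hrow.symm, hbumped.symm⟩
  | trans a b c h _ ih ih' =>
    obtain ⟨hrow, hbumped⟩ := ih hw
    obtain ⟨hrow', hbumped'⟩ := ih' (hw.of_knuthEquiv h)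
    exact ⟨hrow.trans hrow', hbumped.trans hbumped'⟩

theorem KnuthEquiv.firstRow_eq (h : w ≈ₖ w') (hw : Reduced w) : firstRow w = firstRow w' :=
  (h.firstRow_eq_and_bumped hw).1

protected theorem KnuthEquiv.bumped (h : w ≈ₖ w') (hw : Reduced w) : bumped w ≈ₖ bumped w' :=
  (h.firstRow_eq_and_bumped hw).2

protected theorem Reduced.bumped (h : Reduced w) : Reduced (bumped w) :=
  (h.of_knuthEquiv h.knuthEquiv_bumped).of_append_left

theorem firstRow_of_pairwise (h : w.Pairwise (· < ·)) : firstRow w = w := by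
  simp [firstRow, insertWord_of_pairwise_append (r := []) h]

theorem Reduced.length_le_firstRow (hw : Reduced w) (e : w ≈ₖ u ++ v) (hu : u.Pairwise (· < ·)) :
    u.length ≤ (firstRow w).length := by
  rw [e.firstRow_eq hw, firstRow_append, firstRow_of_pairwise hu]
  exact length_le_length_insertWord v u

/-- A word for the tableau of `w` without its first column. -/
def stripColumn (w : List ℤ) : List ℤ := (bumped (w.map Neg.neg)).map Neg.neg

/-- A decreasing word which completes `stripColumn w` to a word equivalent to `w`. -/
def columnWord (w : List ℤ) : List ℤ := (firstRow (w.map Neg.neg)).map Neg.neg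

/-- The first column of the Edelman–Greene tableau, which is transposed by reversing the word. -/
def firstColumn (w : List ℤ) : List ℤ := firstRow w.reverse

protected theorem KnuthEquiv.stripColumn (e : w ≈ₖ w') (hw : Reduced w) :
    stripColumn w ≈ₖ stripColumn w' :=
  (e.neg.bumped hw.neg).neg

theorem KnuthEquiv.firstColumn_eq (e : w ≈ₖ w') (hw : Reduced w) :
    firstColumn w = firstColumn w' :=
  e.reverse.firstRow_eq hw.reverse

theorem Reduced.knuthEquiv_stripColumn (hw : Reduced w) : w ≈ₖ stripColumn w ++ columnWord w := by
  simpa [stripColumn, columnWord] using hw.neg.knuthEquiv_bumped.neg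

protected theorem Reduced.stripColumn (hw : Reduced w) : Reduced (stripColumn w) :=
  hw.neg.bumped.neg

theorem exists_stripColumn_append (u v : List ℤ) :
    ∃ t, stripColumn (u ++ v) = stripColumn u ++ t := by
  simp [stripColumn, bumped_append]

theorem length_stripColumn_add (w : List ℤ) :
    (stripColumn w).length + (columnWord w).length = w.length := by
  simpa [stripColumn, columnWord] using length_bumped_add (w.map Neg.neg)

theorem pairwise_columnWord (w : List ℤ) : (columnWord w).Pairwise (· > ·) := by
  simpa [columnWord, pairwise_map] using pairwise_firstRow (w.map Neg.neg)

theorem pairwise_firstColumn (w : List ℤ) : (firstColumn w).Pairwise (· < ·) :=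
  pairwise_firstRow w.reverse

theorem Reduced.knuthEquiv_firstColumn (hw : Reduced w) :
    ∃ s, w ≈ₖ (firstColumn w).reverse ++ s :=
  ⟨_, by simpa [firstColumn] using hw.reverse.knuthEquiv_bumped.reverse⟩

theorem Reduced.length_columnWord (hw : Reduced w) :
    (columnWord w).length = (firstColumn w).length := by
  apply le_antisymm
  · have e : w.reverse ≈ₖ (columnWord w).reverse ++ (stripColumn w).reverse := by
      simpa using hw.knuthEquiv_stripColumn.reverse
    simpa [firstColumn] using
      hw.reverse.length_le_firstRow e (pairwise_reverse.2 (pairwise_columnWord w))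
  · obtain ⟨s, e⟩ := hw.knuthEquiv_firstColumn
    have e' : w.map Neg.neg ≈ₖ (firstColumn w).reverse.map Neg.neg ++ s.map Neg.neg := by
      simpa using e.neg
    have hinc : ((firstColumn w).reverse.map Neg.neg).Pairwise (· < ·) := by
      simpa [pairwise_map, pairwise_reverse, -map_reverse] using pairwise_firstColumn w
    simpa [columnWord] using hw.neg.length_le_firstRow e' hinc

theorem columnWord_ne_nil (h : w ≠ []) : columnWord w ≠ [] := by
  induction w using List.reverseRecOn with
  | nil => contradiction
  | append_singleton w x _ =>
    simpa [columnWord, firstRow_append_singleton] using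
      ne_nil_of_mem (mem_rowInsert_self (-x) (firstRow (w.map Neg.neg)))

end Tableau

/-! ### Maximal prefixes -/

section MaxPrefix

variable {u v w w' : List ℤ} {k k' : ℤ}

/-- A word with letters above `k` which is a prefix of a word equivalent to `w`. -/
def IsPrefixAbove (k : ℤ) (w u : List ℤ) : Prop := (∃ v, w ≈ₖ u ++ v) ∧ ∀ c ∈ u, k < c

open Classical in
/-- The maximal length of a prefix with letters above `k` of a word equivalent to `w`. -/
noncomputable def maxPrefixLength (w : List ℤ) (k : ℤ) : ℕ :=
  Nat.findGreatest (fun m => ∃ u, IsPrefixAbove k w u ∧ u.length = m) w.length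

/-- A prefix as in the definition of `maxPrefixLength` which attains the maximal length. -/
structure IsMaxPrefix (k : ℤ) (w u : List ℤ) : Prop where
  above : IsPrefixAbove k w u
  length_eq : u.length = maxPrefixLength w k

theorem IsPrefixAbove.reduced (h : IsPrefixAbove k w u) (hw : Reduced w) : Reduced u :=
  let ⟨_, e⟩ := h.1
  (hw.of_knuthEquiv e).of_append_left

theorem IsPrefixAbove.length_le (h : IsPrefixAbove k w u) : u.length ≤ maxPrefixLength w k := by
  classical
  obtain ⟨v, e⟩ := h.1
  have hlen := e.length_eq
  rw [length_append] at hlen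
  exact Nat.le_findGreatest (by lia) ⟨u, h, rfl⟩

theorem exists_isMaxPrefix (w : List ℤ) (k : ℤ) : ∃ u, IsMaxPrefix k w u := by
  classical
  have hnil : IsPrefixAbove k w [] := ⟨⟨w, .refl _⟩, by simp⟩
  obtain ⟨u, hu, hlen⟩ := Nat.findGreatest_spec
    (P := fun m => ∃ u, IsPrefixAbove k w u ∧ u.length = m) (Nat.zero_le w.length)
    ⟨[], hnil, rfl⟩
  exact ⟨u, hu, hlen⟩

theorem maxPrefixLength_le_length (w : List ℤ) (k : ℤ) : maxPrefixLength w k ≤ w.length := by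
  classical
  exact Nat.findGreatest_le _

theorem maxPrefixLength_eq_length {w : List ℤ} {k : ℤ} (h : ∀ c ∈ w, k < c) :
    maxPrefixLength w k = w.length :=
  (maxPrefixLength_le_length w k).antisymm
    (IsPrefixAbove.length_le ⟨⟨[], by simpa using .refl w⟩, h⟩)

theorem KnuthEquiv.maxPrefixLength_eq (e : w ≈ₖ w') (k : ℤ) :
    maxPrefixLength w k = maxPrefixLength w' k := by
  have le {w w' : List ℤ} (e : w ≈ₖ w') : maxPrefixLength w k ≤ maxPrefixLength w' k := by
    obtain ⟨u, ⟨⟨v, e'⟩, hu⟩, hlen⟩ := exists_isMaxPrefix w k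
    exact hlen ▸ IsPrefixAbove.length_le ⟨⟨v, e.symm.trans e'⟩, hu⟩
  exact le_antisymm (le e) (le e.symm)

theorem maxPrefixLength_anti (w : List ℤ) : Antitone (maxPrefixLength w) := by
  intro k k' h
  obtain ⟨u, ⟨hv, hu⟩, hlen⟩ := exists_isMaxPrefix w k'
  exact hlen ▸ IsPrefixAbove.length_le ⟨hv, fun c hc => h.trans_lt (hu c hc)⟩

protected theorem IsPrefixAbove.stripColumn (h : IsPrefixAbove k w u) (hw : Reduced w) :
    IsPrefixAbove k (stripColumn w) (stripColumn u) := by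
  obtain ⟨⟨v, e⟩, hu⟩ := h
  obtain ⟨t, ht⟩ := exists_stripColumn_append u v
  have hur := (hw.of_knuthEquiv e).of_append_left
  refine ⟨⟨t, ht ▸ e.stripColumn hw⟩, fun c hc => hu c ?_⟩
  exact (hur.knuthEquiv_stripColumn.mem_iff c).2 (mem_append_left _ hc)

theorem Reduced.length_eq_stripColumn_add (hw : Reduced w) :
    w.length = (stripColumn w).length + (firstColumn w).length := by
  rw [← hw.length_columnWord, length_stripColumn_add]

theorem IsPrefixAbove.firstColumn_sublist (h : IsPrefixAbove k w u) (hw : Reduced w) :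
    firstColumn u <+ (firstColumn w).filter (k < ·) := by
  obtain ⟨v, e⟩ := h.1
  have hu := (h.reduced hw).reverse.knuthEquiv_bumped
  have e' : w.reverse ≈ₖ v.reverse ++ bumped u.reverse ++ firstColumn u := by
    simpa [firstColumn] using e.reverse.trans (by simpa using hu.append_left v.reverse)
  have hsub : firstColumn u ⊆ firstColumn w := by
    rw [firstColumn, firstColumn, e'.firstRow_eq hw.reverse, firstRow_append]
    exact subset_insertWord (pairwise_firstColumn u) _
  have hlt : ∀ c ∈ firstColumn u, k < c := fun c hc =>
    h.2 c (mem_reverse.1 ((hu.mem_iff c).2 (mem_append_right _ hc)))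
  have hnodup : (firstColumn u).Nodup := (pairwise_firstColumn u).imp ne_of_lt
  exact sublist_of_subperm_of_pairwise
    (hnodup.subperm fun c hc => mem_filter.2 ⟨hsub hc, by simpa using hlt c hc⟩)
    (pairwise_firstColumn u) ((pairwise_firstColumn w).filter _)

theorem eq_filter_le_append_filter_lt {r : List ℤ} (hr : r.Pairwise (· < ·)) (k : ℤ) :
    r = r.filter (· ≤ k) ++ r.filter (k < ·) := by
  refine Perm.eq_of_pairwise (le := (· < ·)) (fun a b _ _ h h' => absurd h h'.not_gt) hr ?_ ?_
  · refine pairwise_append.2 ⟨hr.filter _, hr.filter _, fun a ha b hb => ?_⟩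
    have ha : a ≤ k := by simpa using (mem_filter.1 ha).2
    have hb : k < b := by simpa using (mem_filter.1 hb).2
    exact ha.trans_lt hb
  · convert (filter_append_perm (· ≤ k) r).symm using 4
    simp only [← decide_not, not_le]

theorem countP_firstColumn_eq (hw : Reduced w) (e : w ≈ₖ u ++ v) (hu : ∀ c ∈ u, k < c)
    (hlen : (firstColumn w).length ≤ (firstColumn v).length) :
    (firstColumn w).countP (k < ·) = (firstColumn v).countP (k < ·) := by
  have hcol : firstColumn w = (insertWord u.reverse (firstColumn v)).2 := by
    rw [e.firstColumn_eq hw, firstColumn, firstColumn, reverse_append, firstRow_append]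
  have hlen' := length_le_length_insertWord u.reverse (firstColumn v)
  rw [← hcol] at hlen'
  have hcount := countP_le_insertWord (s := u.reverse) (by simpa using hu) (firstColumn v)
  rw [← hcol] at hcount
  have hsplit_w := length_eq_countP_add_countP (· ≤ k) (l := firstColumn w)
  have hsplit_v := length_eq_countP_add_countP (· ≤ k) (l := firstColumn v)
  simp only [decide_eq_true_eq, not_le] at hsplit_w hsplit_v
  lia

/-- For `≥`, the word `v` left over by a maximal prefix of `stripColumn w` ends in a column, so that
the letters above `k` of the first column of `v` can be moved to its front to extend the prefix. -/
theorem Reduced.maxPrefixLength_eq_add (hw : Reduced w) (k : ℤ) :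
    maxPrefixLength w k =
      maxPrefixLength (stripColumn w) k + (firstColumn w).countP (k < ·) := by
  apply le_antisymm
  · obtain ⟨u, hu, hlen⟩ := exists_isMaxPrefix w k
    have hstrip := (hu.stripColumn hw).length_le
    have hcol := (hu.firstColumn_sublist hw).length_le
    rw [← countP_eq_length_filter] at hcol
    rw [← hlen, (hu.reduced hw).length_eq_stripColumn_add]
    exact add_le_add hstrip hcol
  · obtain ⟨u, ⟨⟨t, e⟩, hu⟩, hlen⟩ := exists_isMaxPrefix (stripColumn w) k
    have e' : w ≈ₖ u ++ (t ++ columnWord w) := by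
      rw [← append_assoc]
      exact hw.knuthEquiv_stripColumn.trans (e.append_right _)
    have hv : Reduced (t ++ columnWord w) := (hw.of_knuthEquiv e').of_append_right
    set v := t ++ columnWord w with hv_def
    have hlen_col : (firstColumn w).length ≤ (firstColumn v).length := by
      have := hv.reverse.length_le_firstRow (u := (columnWord w).reverse) (v := t.reverse)
        (by simpa [hv_def] using KnuthEquiv.refl _) (pairwise_reverse.2 (pairwise_columnWord w))
      rwa [length_reverse, hw.length_columnWord] at this
    obtain ⟨s, es⟩ := hv.knuthEquiv_firstColumn
    rw [eq_filter_le_append_filter_lt (pairwise_firstColumn v) k, reverse_append] at es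
    have above : IsPrefixAbove k w (u ++ ((firstColumn v).filter (k < ·)).reverse) := by
      refine ⟨⟨_, e'.trans (by simpa using es.append_left u)⟩, fun c hc => ?_⟩
      rcases mem_append.1 hc with hc | hc
      exacts [hu c hc, by simpa using (mem_filter.1 (mem_reverse.1 hc)).2]
    rw [countP_firstColumn_eq hw e' hu hlen_col, ← hlen, countP_eq_length_filter]
    simpa using above.length_le

namespace IsMaxPrefix

protected theorem stripColumn (h : IsMaxPrefix k w u) (hw : Reduced w) :
    IsMaxPrefix k (stripColumn w) (stripColumn u) ∧
      firstColumn u = (firstColumn w).filter (k < ·) := by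
  have hstrip := h.above.stripColumn hw
  have hcol := h.above.firstColumn_sublist hw
  have hstrip_le := hstrip.length_le
  have hcol_le := hcol.length_le
  have hlen := h.length_eq
  rw [(h.above.reduced hw).length_eq_stripColumn_add, hw.maxPrefixLength_eq_add,
    countP_eq_length_filter] at hlen
  exact ⟨⟨hstrip, by lia⟩, hcol.eq_of_length (by lia)⟩

protected theorem maxPrefixLength_eq {w u : List ℤ} (h : IsMaxPrefix k w u) (hw : Reduced w)
    (hk : k ≤ k') :
    maxPrefixLength u k' = maxPrefixLength w k' := by
  obtain rfl | hne := eq_or_ne w []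
  · have hu : u = [] := by
      rw [← length_eq_zero_iff, h.length_eq]
      exact Nat.le_zero.1 (maxPrefixLength_le_length [] k)
    rw [hu]
  obtain ⟨hstrip, hcol⟩ := h.stripColumn hw
  have : (stripColumn w).length < w.length := by
    have hpos := length_pos_of_ne_nil (columnWord_ne_nil hne)
    have hadd := length_stripColumn_add w
    lia
  have ih := hstrip.maxPrefixLength_eq hw.stripColumn hk
  rw [hw.maxPrefixLength_eq_add, (h.above.reduced hw).maxPrefixLength_eq_add, ih, hcol,
    countP_filter]
  congr 1
  exact countP_congr fun a _ => by simpa using hk.trans_lt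
termination_by w.length

theorem length_columnWord_iterate (h : IsMaxPrefix k w u) (hw : Reduced w) (i : ℕ) :
    (columnWord (stripColumn^[i] u)).length =
      (firstColumn (stripColumn^[i] w)).countP (k < ·) := by
  induction i generalizing w u with
  | zero =>
    rw [countP_eq_length_filter]
    simpa [(h.above.reduced hw).length_columnWord] using congrArg length (h.stripColumn hw).2
  | succ _ ih => exact ih (h.stripColumn hw).1 hw.stripColumn

end IsMaxPrefix

end MaxPrefix

/-! ### Reversing the insertion of a decreasing word -/

section EndsInRow

variable {u u' v v' w w' : List ℤ} {x x' y : ℤ} {i j : ℕ}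

/-- The length of row `i` (counted from `0`) of the Edelman–Greene tableau of `w`. -/
def rowLength (w : List ℤ) (i : ℕ) : ℕ := (firstRow (bumped^[i] w)).length

theorem KnuthEquiv.rowLength_eq (e : w ≈ₖ w') (hw : Reduced w) (i : ℕ) :
    rowLength w i = rowLength w' i := by
  induction i generalizing w w' with
  | zero => exact congrArg length (e.firstRow_eq hw)
  | succ _ ih => exact ih (e.bumped hw) hw.bumped

/-- `EndsInRow w x i`: inserting `x` into the Edelman–Greene tableau of `w` adds a box to
row `i`. -/
inductive EndsInRow : List ℤ → ℤ → ℕ → Prop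
  | zero {w : List ℤ} {x : ℤ} (h : (rowInsert x (firstRow w)).2 = none) : EndsInRow w x 0
  | succ {w : List ℤ} {x z : ℤ} {i : ℕ} (h : (rowInsert x (firstRow w)).2 = some z)
      (hz : EndsInRow (bumped w) z i) : EndsInRow w x (i + 1)

theorem exists_endsInRow (w : List ℤ) (x : ℤ) : ∃ i, EndsInRow w x i := by
  cases h : (rowInsert x (firstRow w)).2 with
  | none => exact ⟨0, .zero h⟩
  | some z =>
    have : (bumped w).length < w.length := by
      have hpos : 0 < (firstRow w).length := length_pos_of_ne_nil fun h' => by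
        simp [h', rowInsert_nil] at h
      have hadd := length_bumped_add w
      lia
    obtain ⟨i, hi⟩ := exists_endsInRow (bumped w) z
    exact ⟨i + 1, .succ h hi⟩
termination_by w.length

theorem EndsInRow.rowLength_append_singleton (h : EndsInRow w x i) (j : ℕ) :
    rowLength (w ++ [x]) j = rowLength w j + if j = i then 1 else 0 := by
  induction h generalizing j with
  | @zero w x h =>
    have hlen := length_rowInsert x (firstRow w)
    cases j <;> simp_all [rowLength, firstRow_append_singleton, bumped_append_singleton]
  | @succ w x z i h _ ih =>
    have hlen := length_rowInsert x (firstRow w)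
    cases j with
    | zero => simp_all [rowLength, firstRow_append_singleton]
    | succ j => simpa [rowLength, bumped_append_singleton, h] using ih j

theorem EndsInRow.lt_of_lt (h : EndsInRow w x i) (hyx : y < x) (h' : EndsInRow (w ++ [x]) y j) :
    i < j := by
  have hbump {w : List ℤ} {x y : ℤ} (hyx : y < x) :
      ∃ z ∈ (rowInsert y (firstRow (w ++ [x]))).2, z ≤ x :=
    exists_bump_le (pairwise_firstRow _)
      (by rw [firstRow_append_singleton]; exact mem_rowInsert_self x _) hyx
  induction h generalizing y j with
  | @zero w x _ =>
    obtain ⟨z, hz, -⟩ := hbump (w := w) hyx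
    cases h' with
    | zero h' => simp [h'] at hz
    | succ _ _ => exact Nat.succ_pos _
  | @succ w x z i h _ ih =>
    obtain ⟨z', hz', hle⟩ := hbump (w := w) hyx
    cases h' with
    | zero h' => simp [h'] at hz'
    | succ h' hj =>
      obtain rfl : _ = z' := by simpa [h'] using hz'
      rw [bumped_append_singleton, h] at hj
      exact Nat.succ_lt_succ (ih (hle.trans_lt (lt_of_mem_bump h)) hj)

theorem Reduced.knuthEquiv_of_bumped (hw : Reduced w) (hw' : Reduced w')
    (e : bumped w ≈ₖ bumped w') (h : firstRow w = firstRow w') : w ≈ₖ w' :=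
  (hw.knuthEquiv_bumped.trans (e.append_right _)).trans (h ▸ hw'.knuthEquiv_bumped.symm)

theorem EndsInRow.knuthEquiv_and_eq (h : EndsInRow w x i) (h' : EndsInRow w' x' i)
    (hd : Reduced (w ++ [x])) (e : w ++ [x] ≈ₖ w' ++ [x']) : w ≈ₖ w' ∧ x = x' := by
  induction h generalizing w' x' with
  | @zero w x h =>
    cases h' with
    | zero h' =>
      have hrow := e.firstRow_eq hd
      have hbumped := e.bumped hd
      simp only [firstRow_append_singleton, rowInsert_eq_of_bump_eq_none h,
        rowInsert_eq_of_bump_eq_none h'] at hrow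
      simp only [bumped_append_singleton, h, h', Option.toList_none, append_nil] at hbumped
      obtain ⟨hrow, hx⟩ := append_inj' hrow rfl
      exact ⟨hd.of_append_left.knuthEquiv_of_bumped (hd.of_knuthEquiv e).of_append_left hbumped
        hrow, singleton_inj.1 hx⟩
  | @succ w x z i h _ ih =>
    cases h' with
    | @succ _ _ z' _ h' hz' =>
      have hrow := e.firstRow_eq hd
      have hbumped := e.bumped hd
      have hd_bumped := hd.bumped
      simp only [bumped_append_singleton, h, h', Option.toList_some] at hbumped hd_bumped
      rw [firstRow_append_singleton, firstRow_append_singleton] at hrow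
      obtain ⟨e_bumped, rfl⟩ := ih hz' hd_bumped hbumped
      obtain ⟨hrow, hx⟩ := rowInsert_injective (pairwise_firstRow w) (pairwise_firstRow w')
        hd.firstRow_append (hd.of_knuthEquiv e).firstRow_append hrow h h'
      exact ⟨hd.of_append_left.knuthEquiv_of_bumped (hd.of_knuthEquiv e).of_append_left e_bumped
        hrow, hx⟩

theorem rowLength_le_append (u v : List ℤ) (j : ℕ) : rowLength u j ≤ rowLength (u ++ v) j := by
  induction v using List.reverseRecOn with
  | nil => simp
  | append_singleton v y ih =>
    obtain ⟨i, hi⟩ := exists_endsInRow (u ++ v) y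
    rw [← append_assoc, hi.rowLength_append_singleton j]
    exact ih.trans (Nat.le_add_right _ _)

theorem EndsInRow.rowLength_lt (h : EndsInRow (u ++ v) x i) :
    rowLength u i < rowLength (u ++ (v ++ [x])) i := by
  rw [← append_assoc, h.rowLength_append_singleton, if_pos rfl]
  exact Nat.lt_succ_of_le (rowLength_le_append u v i)

theorem EndsInRow.rowLength_eq_of_lt (h : EndsInRow (u ++ v) x i)
    (hv : (v ++ [x]).Pairwise (· > ·)) (hij : i < j) :
    rowLength (u ++ (v ++ [x])) j = rowLength u j := by
  induction v using List.reverseRecOn generalizing x i with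
  | nil =>
    rw [append_nil] at h
    simpa [hij.ne'] using h.rowLength_append_singleton j
  | append_singleton v y ih =>
    obtain ⟨i₀, h₀⟩ := exists_endsInRow (u ++ v) y
    have hvy := pairwise_append.1 hv
    have hxy : x < y := hvy.2.2 y (by simp) x (by simp)
    have hlt := h₀.lt_of_lt hxy (by simpa using h)
    rw [← append_assoc, h.rowLength_append_singleton, if_neg hij.ne', add_zero,
      ih h₀ hvy.1 (hlt.trans hij)]

theorem EndsInRow.eq_of_rowLength_eq (h : EndsInRow (u ++ v) x i) (h' : EndsInRow (u' ++ v') x' j)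
    (hv : (v ++ [x]).Pairwise (· > ·)) (hv' : (v' ++ [x']).Pairwise (· > ·))
    (hu : ∀ k, rowLength u k = rowLength u' k)
    (hw : ∀ k, rowLength (u ++ (v ++ [x])) k = rowLength (u' ++ (v' ++ [x'])) k) : i = j := by
  have hlt := h.rowLength_lt
  have hlt' := h'.rowLength_lt
  rcases lt_trichotomy i j with hij | hij | hij
  · have heq := h.rowLength_eq_of_lt hv hij
    rw [hw, hu] at heq
    lia
  · exact hij
  · have heq := h'.rowLength_eq_of_lt hv' hij
    rw [← hw, ← hu] at heq
    lia

/-- The boxes added by a decreasing word form a vertical strip, filled from top to bottom; so the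
shape alone tells in which row each of its letters ends. -/
theorem knuthEquiv_and_eq_of_decreasing (hd : Reduced (u ++ v)) (e : u ++ v ≈ₖ u' ++ v')
    (hlen : v.length = v'.length) (hv : v.Pairwise (· > ·)) (hv' : v'.Pairwise (· > ·))
    (hu : ∀ i, rowLength u i = rowLength u' i) : u ≈ₖ u' ∧ v = v' := by
  induction v using List.reverseRecOn generalizing v' with
  | nil =>
    obtain rfl := length_eq_zero_iff.1 hlen.symm
    simpa using e
  | append_singleton v x ih =>
    rcases eq_nil_or_concat v' with rfl | ⟨v', x', rfl⟩
    · simp at hlen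
    rw [concat_eq_append] at e hlen hv'
    obtain ⟨i, hi⟩ := exists_endsInRow (u ++ v) x
    obtain ⟨i', hi'⟩ := exists_endsInRow (u' ++ v') x'
    obtain rfl := hi.eq_of_rowLength_eq hi' hv hv' hu (e.rowLength_eq hd)
    rw [← append_assoc] at e hd
    rw [← append_assoc] at e
    obtain ⟨e_init, rfl⟩ := hi.knuthEquiv_and_eq hi' hd e
    obtain ⟨e_u, rfl⟩ := ih hd.of_append_left e_init (by simpa using hlen) (pairwise_append.1 hv).1
      (pairwise_append.1 hv').1
    exact ⟨e_u, (concat_eq_append ..).symm⟩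

theorem iterate_stripColumn (w : List ℤ) (i : ℕ) :
    stripColumn^[i] w = (bumped^[i] (w.map Neg.neg)).map Neg.neg := by
  induction i generalizing w with
  | zero => simp
  | succ i ih => simp [ih, stripColumn]

theorem length_columnWord_iterate (w : List ℤ) (i : ℕ) :
    (columnWord (stripColumn^[i] w)).length = rowLength (w.map Neg.neg) i := by
  simp [iterate_stripColumn, columnWord, rowLength]

theorem knuthEquiv_and_eq_of_increasing (hd : Reduced (u ++ v)) (e : u ++ v ≈ₖ u' ++ v')
    (hlen : v.length = v'.length) (hv : v.Pairwise (· < ·)) (hv' : v'.Pairwise (· < ·))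
    (hu : ∀ i, (columnWord (stripColumn^[i] u)).length =
      (columnWord (stripColumn^[i] u')).length) :
    u ≈ₖ u' ∧ v = v' := by
  have hd_neg := hd.neg
  have e_neg := e.neg
  rw [map_append] at hd_neg e_neg
  rw [map_append] at e_neg
  obtain ⟨hu_neg, hv_neg⟩ := knuthEquiv_and_eq_of_decreasing hd_neg e_neg (by simpa using hlen)
    (by simpa [pairwise_map] using hv) (by simpa [pairwise_map] using hv')
    (by simpa only [length_columnWord_iterate] using hu)
  exact ⟨by simpa using hu_neg.neg, map_injective_iff.2 neg_injective hv_neg⟩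

end EndsInRow

/-! ### Flag words -/

section FlagWord

variable {v w y z : List ℤ}

/-- Flag words: at every threshold `k`, the words equivalent to `w` whose initial letters above `k`
are as many as possible. They turn out to be the Yamanouchi words. -/
structure IsFlagWord (w y : List ℤ) : Prop where
  equiv : w ≈ₖ y
  lt_of_mem_take : ∀ k, ∀ c ∈ y.take (maxPrefixLength w k), k < c

theorem exists_isFlagWord_of_mem_Ioc (hw : Reduced w) {k : ℤ} {n : ℕ}
    (h : ∀ c ∈ w, k < c ∧ c ≤ k + n) : ∃ y, IsFlagWord w y := by
  induction n generalizing k w with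
  | zero =>
    obtain rfl := eq_nil_iff_forall_not_mem.2 fun c hc => by have := h c hc; lia
    exact ⟨[], .refl _, by simp⟩
  | succ n ih =>
    obtain ⟨u, hu⟩ := exists_isMaxPrefix w (k + 1)
    obtain ⟨⟨v, e⟩, hgt⟩ := hu.above
    obtain ⟨y, hy⟩ := ih (k := k + 1) (hu.above.reduced hw) fun c hc => by
      have hcw := h c ((e.mem_iff c).2 (mem_append_left v hc))
      have hkc := hgt c hc
      lia
    have ey : w ≈ₖ y ++ v := e.trans (hy.equiv.append_right v)
    refine ⟨y ++ v, ey, fun k' c hc => ?_⟩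
    rcases le_or_gt (k + 1) k' with hk | hk
    · have hle := maxPrefixLength_le_length u k'
      rw [hy.equiv.length_eq] at hle
      rw [← hu.maxPrefixLength_eq hw hk, take_append_of_le_length hle] at hc
      exact hy.lt_of_mem_take k' c hc
    · have hcw := h c ((ey.mem_iff c).2 (mem_of_mem_take hc))
      lia

theorem exists_forall_mem_Ioc (w : List ℤ) : ∃ (k : ℤ) (n : ℕ), ∀ c ∈ w, k < c ∧ c ≤ k + n := by
  obtain ⟨a, ha⟩ := w.toFinset.bddBelow
  obtain ⟨b, hb⟩ := w.toFinset.bddAbove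
  refine ⟨a - 1, (b - a + 1).toNat, fun c hc => ?_⟩
  have hac := ha (mem_toFinset.2 hc)
  have hcb := hb (mem_toFinset.2 hc)
  lia

theorem exists_isFlagWord (hw : Reduced w) : ∃ y, IsFlagWord w y :=
  let ⟨_, _, h⟩ := exists_forall_mem_Ioc w
  exists_isFlagWord_of_mem_Ioc hw h

theorem lt_of_mem_bumped {k : ℤ} (h : ∀ c ∈ v, k < c) : ∀ z ∈ bumped v, k + 1 < z := by
  induction v using List.reverseRecOn with
  | nil => simp [bumped, insertWord]
  | append_singleton v x ih =>
    simp only [forall_mem_append, forall_mem_singleton, bumped_append_singleton,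
      Option.mem_toList] at h ⊢
    exact ⟨ih h.1, fun z hz => (Int.add_one_le_of_lt h.2).trans_lt (lt_of_mem_bump hz)⟩

theorem firstRow_eq_of_bumped_eq_nil (h : bumped v = []) : firstRow v = v := by
  induction v using List.reverseRecOn with
  | nil => rfl
  | append_singleton v x ih =>
    rw [bumped_append_singleton, append_eq_nil_iff, Option.toList_eq_nil_iff] at h
    rw [firstRow_append_singleton, rowInsert_eq_of_bump_eq_none h.2, ih h.1]

/-- The letters of a flag word between two successive maximal prefixes. -/
noncomputable def flagSegment (w y : List ℤ) (k : ℤ) : List ℤ :=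
  (y.take (maxPrefixLength w k)).drop (maxPrefixLength w (k + 1))

theorem take_append_flagSegment (w y : List ℤ) (k : ℤ) :
    y.take (maxPrefixLength w (k + 1)) ++ flagSegment w y k = y.take (maxPrefixLength w k) := by
  have hle := maxPrefixLength_anti w (Int.le_add_one (le_refl k))
  simpa [flagSegment, take_take, hle] using
    take_append_drop (maxPrefixLength w (k + 1)) (y.take (maxPrefixLength w k))

namespace IsFlagWord

theorem of_equiv {w' : List ℤ} (h : IsFlagWord w' y) (e : w ≈ₖ w') : IsFlagWord w y :=
  ⟨e.trans h.equiv, fun k c hc => h.lt_of_mem_take k c (e.maxPrefixLength_eq k ▸ hc)⟩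

theorem isMaxPrefix (h : IsFlagWord w y) (k : ℤ) :
    IsMaxPrefix k w (y.take (maxPrefixLength w k)) where
  above := ⟨⟨_, (take_append_drop _ y).symm ▸ h.equiv⟩, h.lt_of_mem_take k⟩
  length_eq := length_take_of_le (h.equiv.length_eq ▸ maxPrefixLength_le_length w k)

/-- If a letter were bumped when inserting the segment, it would exceed `k + 1` and extend the
maximal prefix. -/
theorem pairwise_flagSegment (h : IsFlagWord w y) (hw : Reduced w) (k : ℤ) :
    (flagSegment w y k).Pairwise (· < ·) := by
  have hsplit := take_append_flagSegment w y k
  have hd : Reduced (flagSegment w y k) := by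
    have hd := (h.isMaxPrefix k).above.reduced hw
    rw [← hsplit] at hd
    exact hd.of_append_right
  cases hb : bumped (flagSegment w y k) with
  | nil =>
    rw [← firstRow_eq_of_bumped_eq_nil hb]
    exact pairwise_firstRow _
  | cons z t =>
    exfalso
    have hz : k + 1 < z := by
      refine lt_of_mem_bumped (fun c hc => h.lt_of_mem_take k c ?_) z (hb ▸ mem_cons_self)
      exact hsplit ▸ mem_append_right _ hc
    have hext : IsPrefixAbove (k + 1) w (y.take (maxPrefixLength w (k + 1)) ++ [z]) := by
      refine ⟨⟨t ++ firstRow (flagSegment w y k) ++ y.drop (maxPrefixLength w k), ?_⟩, ?_⟩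
      · have e := hd.knuthEquiv_bumped.append_append (y.take (maxPrefixLength w (k + 1)))
          (y.drop (maxPrefixLength w k))
        rw [hsplit, take_append_drop, hb] at e
        simpa using h.equiv.trans e
      · rw [forall_mem_append, forall_mem_singleton]
        exact ⟨h.lt_of_mem_take (k + 1), hz⟩
    have hle := hext.length_le
    rw [length_append, (h.isMaxPrefix (k + 1)).length_eq] at hle
    exact Nat.not_succ_le_self _ hle

theorem length_flagSegment (h : IsFlagWord w y) (k : ℤ) :
    (flagSegment w y k).length = maxPrefixLength w k - maxPrefixLength w (k + 1) := by
  rw [flagSegment, length_drop, (h.isMaxPrefix k).length_eq]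

theorem take_succ (hy : IsFlagWord w y) (hz : IsFlagWord w z) (hw : Reduced w) {k : ℤ}
    (e : y.take (maxPrefixLength w k) ≈ₖ z.take (maxPrefixLength w k)) :
    y.take (maxPrefixLength w (k + 1)) ≈ₖ z.take (maxPrefixLength w (k + 1)) ∧
      flagSegment w y k = flagSegment w z k := by
  have hd := (hy.isMaxPrefix k).above.reduced hw
  rw [← take_append_flagSegment] at hd e
  rw [← take_append_flagSegment w z] at e
  exact knuthEquiv_and_eq_of_increasing hd e
    ((hy.length_flagSegment k).trans (hz.length_flagSegment k).symm) (hy.pairwise_flagSegment hw k)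
    (hz.pairwise_flagSegment hw k) fun i =>
      ((hy.isMaxPrefix _).length_columnWord_iterate hw i).trans
        ((hz.isMaxPrefix _).length_columnWord_iterate hw i).symm

protected theorem unique (hy : IsFlagWord w y) (hz : IsFlagWord w z) (hw : Reduced w) :
    y = z := by
  obtain ⟨k, n, hkn⟩ := exists_forall_mem_Ioc w
  have max_bot : maxPrefixLength w k = w.length :=
    maxPrefixLength_eq_length fun c hc => (hkn c hc).1
  have max_top : maxPrefixLength w (k + n) = 0 := by
    obtain ⟨u, ⟨⟨v, e⟩, hu⟩, hlen⟩ := exists_isMaxPrefix w (k + n)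
    rw [← hlen, length_eq_zero_iff, eq_nil_iff_forall_not_mem]
    exact fun c hc => (hu c hc).not_ge (hkn c ((e.mem_iff c).2 (mem_append_left v hc))).2
  have prefixes (m : ℕ) :
      y.take (maxPrefixLength w (k + m)) ≈ₖ z.take (maxPrefixLength w (k + m)) ∧
        (y.take (maxPrefixLength w (k + m)) = z.take (maxPrefixLength w (k + m)) → y = z) := by
    induction m with
    | zero =>
      simpa [max_bot, take_of_length_le, ← hy.equiv.length_eq, ← hz.equiv.length_eq] using
        hy.equiv.symm.trans hz.equiv
    | succ m ih =>
      obtain ⟨e, hsegment⟩ := hy.take_succ hz hw ih.1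
      rw [Nat.cast_succ, ← add_assoc]
      refine ⟨e, fun h => ih.2 ?_⟩
      rw [← take_append_flagSegment w y, ← take_append_flagSegment w z, h, hsegment]
  exact (prefixes n).2 (by simp [max_top])

end IsFlagWord

end FlagWord

/-! ### Runs and their minima -/

/-- `hatMins` with an upper bound `b` for the first entry. -/
def hatMinsBelow : ℤ → List ℤ → List ℤ
  | _, [] => []
  | b, r :: L => min r b :: hatMinsBelow (min r b - 1) L

theorem hatMins_eq_hatMinsBelow {b : ℤ} {L : List ℤ} (hb : ∀ r ∈ L.head?, r ≤ b) :
    hatMins L = hatMinsBelow b L := by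
  have foldl_eq (L A : List ℤ) (p : ℤ) :
      (L.foldl (fun (acc : List ℤ × Option ℤ) r =>
        let v := match acc.2 with
          | none => r
          | some p => min r (p - 1)
        (acc.1 ++ [v], some v)) (A, some p)).1 = A ++ hatMinsBelow (p - 1) L := by
    induction L generalizing A p with
    | nil => simp [hatMinsBelow]
    | cons r L ih => simp [ih, hatMinsBelow]
  cases L with
  | nil => rfl
  | cons r L =>
    rw [hatMinsBelow, min_eq_left (hb r rfl)]
    exact foldl_eq L [r] r

theorem le_of_mem_hatMinsBelow {b x : ℤ} {L : List ℤ} (hx : x ∈ hatMinsBelow b L) : x ≤ b := by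
  induction L generalizing b with
  | nil => simp [hatMinsBelow] at hx
  | cons r L ih =>
    rw [hatMinsBelow, mem_cons] at hx
    rcases hx with rfl | hx
    · exact min_le_right r b
    · have hle := ih hx
      lia

theorem pairwise_hatMinsBelow (b : ℤ) (L : List ℤ) : (hatMinsBelow b L).Pairwise (· > ·) := by
  induction L generalizing b with
  | nil => exact .nil
  | cons r L ih =>
    exact pairwise_cons.2 ⟨fun x hx => Int.lt_of_le_sub_one (le_of_mem_hatMinsBelow hx), ih _⟩

theorem buildWeakComp_eq (H : List ℤ) (N : List ℕ) :
    buildWeakComp H N =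
      (range (H.headD 0).toNat).map fun p : ℕ => ((H.zip N).lookup ((p : ℤ) + 1)).getD 0 := by
  have find?_eq (Z : List (ℤ × ℕ)) (a : ℤ) :
      Z.find? (fun q => decide (q.1 = a)) = (Z.lookup a).map (a, ·) := by
    induction Z with
    | nil => rfl
    | cons q Z ih => by_cases h : q.1 = a <;> grind
  simp only [buildWeakComp, find?_eq, List.bind_eq_flatMap, List.pure_def, ← List.map_eq_flatMap,
    map_map]
  refine map_congr_left fun p _ => ?_
  simp only [Function.comp_apply]
  cases (H.zip N).lookup ((p : ℤ) + 1) <;> rfl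

theorem sum_lookup_getD {Z : List (ℤ × ℕ)} (hZ : Z.Pairwise (·.1 > ·.1)) (hpos : ∀ q ∈ Z, 0 < q.1)
    (K : ℕ) : ∑ p ∈ Finset.range K, (Z.lookup ((p : ℤ) + 1)).getD 0 =
      (Z.map fun q => if q.1 ≤ (K : ℤ) then q.2 else 0).sum := by
  induction Z with
  | nil => simp
  | cons q Z ih =>
    obtain ⟨h, l⟩ := q
    rw [pairwise_cons] at hZ
    have lookup_eq (a : ℤ) : (lookup a ((h, l) :: Z)).getD 0 =
        (if a = h then l else 0) + (Z.lookup a).getD 0 := by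
      by_cases ha : a = h
      · have hnone : Z.lookup a = none := lookup_eq_none_iff.2 fun q hq => by
          simpa [ha] using (hZ.1 q hq).ne'
        simp [lookup_cons_self, ← ha, hnone]
      · simp [lookup_cons, beq_false_of_ne ha, ha]
    have sum_eq : (∑ p ∈ Finset.range K, if (p : ℤ) + 1 = h then l else 0) =
        if h ≤ K then l else 0 := by
      obtain ⟨n, rfl⟩ : ∃ n : ℕ, h = n + 1 := ⟨(h - 1).toNat, by have := hpos _ mem_cons_self; lia⟩
      simp
    simp only [lookup_eq, Finset.sum_add_distrib, sum_eq, map_cons, sum_cons,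
      ih hZ.2 fun q hq => hpos q (mem_cons_of_mem _ hq)]

theorem desFromBlocks_eq_some_iff {L : List ℤ} {N d : List ℕ} (hL : (hatMins L).Pairwise (· > ·)) :
    desFromBlocks L N = some d ↔
      (∀ x ∈ hatMins L, 0 < x) ∧ buildWeakComp (hatMins L) N = d := by
  unfold desFromBlocks
  generalize hatMins L = H at *
  rcases eq_nil_or_concat H with rfl | ⟨H, x, rfl⟩
  · simp [buildWeakComp]
  · simp only [concat_eq_append, pairwise_append] at hL ⊢
    have hpos : (∀ y ∈ H ++ [x], 0 < y) ↔ 0 < x :=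
      ⟨fun h => h x (by simp), fun h => forall_mem_append.2
        ⟨fun y hy => h.trans (hL.2.2 y hy x mem_cons_self), forall_mem_singleton.2 h⟩⟩
    simp [hpos, -mem_append]

theorem sum_take_buildWeakComp {H : List ℤ} (N : List ℕ) (hH : H.Pairwise (· > ·))
    (hpos : ∀ x ∈ H, 0 < x) (K : ℕ) :
    ((buildWeakComp H N).take K).sum =
      ((H.zip N).map fun q => if q.1 ≤ (K : ℤ) then q.2 else 0).sum := by
  have mem_left {q : ℤ × ℕ} (hq : q ∈ H.zip N) : q.1 ∈ H := (of_mem_zip (a := q.1) (b := q.2) hq).1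
  have hzip : (H.zip N).Pairwise (·.1 > ·.1) :=
    pairwise_iff_getElem.2 fun i j _ _ hij => by
      simpa using pairwise_iff_getElem.1 hH i j _ _ hij
  have le_head {x : ℤ} (hx : x ∈ H) : x ≤ H.headD 0 := by
    cases H with
    | nil => simp at hx
    | cons y H => exact (mem_cons.1 hx).elim le_of_eq fun hx => (rel_of_pairwise_cons hH hx).le
  rw [buildWeakComp_eq, ← map_take, take_range]
  refine (sum_lookup_getD hzip (fun q hq => hpos _ (mem_left hq)) _).trans ?_
  congr 1
  refine map_congr_left fun q hq => if_congr ?_ rfl rfl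
  have hq := le_head (mem_left hq)
  lia

/-- For consecutive blocks `R`, the total length of the blocks before the first one whose entry in
`hatMinsBelow b` is at most `k`. -/
def lengthAbove : ℤ → List (List ℤ) → ℤ → ℕ
  | _, [], _ => 0
  | b, A :: R, k =>
    if k < min (A.headD 0) b then A.length + lengthAbove (min (A.headD 0) b - 1) R k else 0

theorem lengthAbove_eq_zero {b k : ℤ} (R : List (List ℤ)) (h : b ≤ k) : lengthAbove b R k = 0 := by
  cases R with
  | nil => rfl
  | cons A R => exact if_neg (by lia)

theorem sum_add_lengthAbove (b : ℤ) (R : List (List ℤ)) (k : ℤ) :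
    (((hatMinsBelow b (R.map (·.headD 0))).zip (R.map length)).map
      fun q => if q.1 ≤ k then q.2 else 0).sum + lengthAbove b R k = R.flatten.length := by
  induction R generalizing b with
  | nil => rfl
  | cons A R ih =>
    have hrest := ih (min (A.headD 0) b - 1)
    rw [length_flatten] at hrest
    by_cases h : k < min (A.headD 0) b
    · simp only [map_cons, hatMinsBelow, zip_cons_cons, sum_cons, lengthAbove, flatten_cons,
        length_append, length_flatten, if_pos h, if_neg h.not_ge]
      lia
    · rw [lengthAbove_eq_zero R (by lia)] at hrest
      simp only [map_cons, hatMinsBelow, zip_cons_cons, sum_cons, lengthAbove, flatten_cons,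
        length_append, length_flatten, if_neg h, if_pos (not_lt.1 h)]
      lia

theorem lengthAbove_le (b : ℤ) (R : List (List ℤ)) (k : ℤ) :
    lengthAbove b R k ≤ R.flatten.length :=
  (sum_add_lengthAbove b R k).symm ▸ Nat.le_add_left ..

theorem lt_of_mem_hatMinsBelow {b k : ℤ} {R : List (List ℤ)} (hR : ∀ A ∈ R, A ≠ [])
    (h : lengthAbove b R k = R.flatten.length) :
    ∀ x ∈ hatMinsBelow b (R.map (·.headD 0)), k < x := by
  induction R generalizing b with
  | nil => simp [hatMinsBelow]
  | cons A R ih =>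
    rw [forall_mem_cons] at hR
    have hA := length_pos_iff.2 hR.1
    rw [lengthAbove, flatten_cons, length_append] at h
    have hk : k < min (A.headD 0) b := by
      by_contra hk
      rw [if_neg hk] at h
      lia
    rw [if_pos hk] at h
    exact forall_mem_cons.2 ⟨hk, ih hR.2 (Nat.add_left_cancel h)⟩

/-- The list `R` is the run decomposition of `R.flatten`. -/
structure IsRunDecomposition (R : List (List ℤ)) : Prop where
  ne_nil : ∀ A ∈ R, A ≠ []
  pairwise_lt : ∀ A ∈ R, A.Pairwise (· < ·)
  isChain : R.IsChain fun A B => ∀ a ∈ A.getLast?, ∀ c ∈ B.head?, c ≤ a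

theorem isRunDecomposition_cons {A : List ℤ} {R : List (List ℤ)} :
    IsRunDecomposition (A :: R) ↔ A ≠ [] ∧ A.Pairwise (· < ·) ∧
      (∀ B ∈ R.head?, ∀ a ∈ A.getLast?, ∀ c ∈ B.head?, c ≤ a) ∧ IsRunDecomposition R := by
  constructor
  · rintro ⟨hne, hlt, hbreak⟩
    rw [forall_mem_cons] at hne hlt
    rw [isChain_cons] at hbreak
    exact ⟨hne.1, hlt.1, hbreak.1, hne.2, hlt.2, hbreak.2⟩
  · rintro ⟨hne, hlt, hbreak, hR⟩
    exact ⟨forall_mem_cons.2 ⟨hne, hR.ne_nil⟩, forall_mem_cons.2 ⟨hlt, hR.pairwise_lt⟩,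
      isChain_cons.2 ⟨hbreak, hR.isChain⟩⟩

theorem lt_of_mem_take_lengthAbove {b k : ℤ} {R : List (List ℤ)} (hR : IsRunDecomposition R) :
    ∀ c ∈ R.flatten.take (lengthAbove b R k), k < c := by
  induction R generalizing b with
  | nil => simp
  | cons A R ih =>
    obtain ⟨hne, hA, -, hR⟩ := isRunDecomposition_cons.1 hR
    rw [lengthAbove, flatten_cons]
    split_ifs with hk
    · rw [take_length_add_append, forall_mem_append]
      refine ⟨fun c hc => ?_, ih hR⟩
      obtain ⟨a, A, rfl⟩ := exists_cons_of_ne_nil hne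
      have hac : a ≤ c := by
        rcases mem_cons.1 hc with rfl | hc
        · rfl
        · exact (rel_of_pairwise_cons hA hc).le
      exact (lt_min_iff.1 hk).1.trans_le hac
    · simp

theorem length_lt_of_pairwise_drop_take {p s : List ℤ} {a c : ℤ} {m n : ℕ} (hac : c ≤ a)
    (hm : p.length + 1 < m) (h : (((p ++ a :: c :: s).take m).drop n).Pairwise (· < ·)) :
    p.length < n := by
  by_contra! hn
  obtain ⟨m, rfl⟩ := Nat.exists_eq_add_of_le hm
  rw [show p.length + 1 + 1 + m = p.length + (m + 2) by lia, take_length_add_append, take_succ_cons,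
    take_succ_cons, drop_append_of_le_length hn, pairwise_append] at h
  exact hac.not_gt (rel_of_pairwise_cons h.2.1 mem_cons_self)

/-- A break between two runs inside the first `M k` letters lies inside the first `M (k + 1)`
letters, so the minima of successive runs have room to decrease. -/
theorem IsFlagWord.maxPrefixLength_le_add_lengthAbove {w P : List ℤ} {R : List (List ℤ)}
    (h : IsFlagWord w (P ++ R.flatten)) (hw : Reduced w) (hR : IsRunDecomposition R) {b : ℤ}
    (hb : ∀ k, P.length < maxPrefixLength w k → k < b) (k : ℤ) :
    maxPrefixLength w k ≤ P.length + lengthAbove b R k := by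
  have le_length (k : ℤ) : maxPrefixLength w k ≤ P.length + R.flatten.length := by
    rw [← length_append, ← h.equiv.length_eq]
    exact maxPrefixLength_le_length w k
  induction R generalizing P b k with
  | nil => exact le_length k
  | cons A R ih =>
    obtain ⟨hne, hA, hbreak, hR⟩ := isRunDecomposition_cons.1 hR
    have lt_min {k : ℤ} (hk : P.length < maxPrefixLength w k) : k < min (A.headD 0) b := by
      obtain ⟨a, A, rfl⟩ := exists_cons_of_ne_nil hne
      refine lt_min (h.lt_of_mem_take k _ ?_) (hb k hk)
      obtain ⟨m, hm⟩ := Nat.exists_eq_add_of_lt hk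
      simp [hm, add_assoc, take_length_add_append]
    rcases le_or_gt (maxPrefixLength w k) P.length with hk | hk
    · exact hk.trans (Nat.le_add_right ..)
    have hflag : IsFlagWord w ((P ++ A) ++ R.flatten) := by simpa using h
    rw [lengthAbove, if_pos (lt_min hk), ← add_assoc, ← length_append]
    refine ih hflag hR (fun j hj => ?_) k fun j => by simpa [add_assoc] using le_length j
    suffices hj' : P.length < maxPrefixLength w (j + 1) from Int.lt_sub_right_of_add_lt (lt_min hj')
    cases R with
    | nil => simpa using hj.trans_le (le_length j)
    | cons B R =>
      obtain ⟨c, B, rfl⟩ := exists_cons_of_ne_nil (hR.ne_nil B mem_cons_self)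
      obtain ⟨A, a, rfl⟩ := (eq_nil_or_concat A).resolve_left hne
      have hca : c ≤ a := hbreak _ rfl a (by simp) c rfl
      have hseg := h.pairwise_flagSegment hw j
      have hP := length_lt_of_pairwise_drop_take (p := P ++ A) (s := B ++ R.flatten) hca
        (m := maxPrefixLength w j) (n := maxPrefixLength w (j + 1)) (by simpa [add_assoc] using hj)
        (by simpa [flagSegment] using hseg)
      rw [length_append] at hP
      exact (Nat.le_add_right ..).trans_lt hP

/-! ### Weak descent compositions -/

section DesWord

/-- A word in natural numbers as an integer word. -/
def intWord (σ : List ℕ) : List ℤ := σ.map Nat.cast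

variable {ρ σ : List ℕ} {w : List ℤ}

theorem length_intWord (σ : List ℕ) : (intWord σ).length = σ.length := length_map _

theorem intWord_injective : Function.Injective intWord := map_injective_iff.2 Nat.cast_injective

theorem intWord_map_toNat (h : ∀ c ∈ w, 0 ≤ c) : intWord (w.map Int.toNat) = w := by
  rw [intWord, map_map]
  exact (map_congr_left fun c hc => Int.toNat_of_nonneg (h c hc)).trans (map_id w)

theorem map_toNat_intWord (σ : List ℕ) : (intWord σ).map Int.toNat = σ := by
  simp [intWord, Function.comp_def]

theorem flatten_splitWhen (brk : ℕ → ℕ → Bool) (σ : List ℕ) : (splitWhen brk σ).flatten = σ := by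
  fun_induction splitWhen brk σ <;> grind

theorem exists_splitWhen_cons_cons (brk : ℕ → ℕ → Bool) (a b : ℕ) (σ : List ℕ) :
    ∃ A R, splitWhen brk (b :: σ) = (b :: A) :: R ∧ splitWhen brk (a :: b :: σ) =
      if brk a b then [a] :: (b :: A) :: R else (a :: b :: A) :: R := by
  induction σ generalizing a b with
  | nil => exact ⟨[], [], rfl, rfl⟩
  | cons c σ ih =>
    obtain ⟨A, R, -, h'⟩ := ih b c
    by_cases hbc : brk b c
    · exact ⟨[], (c :: A) :: R, by rw [h', if_pos hbc], by rw [splitWhen, h', if_pos hbc]⟩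
    · exact ⟨c :: A, R, by rw [h', if_neg hbc], by rw [splitWhen, h', if_neg hbc]⟩

/-- The runs of a word, as integer words. -/
def intRuns (σ : List ℕ) : List (List ℤ) := (runs σ).map intWord

theorem flatten_intRuns (σ : List ℕ) : (intRuns σ).flatten = intWord σ :=
  map_flatten.symm.trans (congrArg intWord (flatten_splitWhen _ σ))

theorem isRunDecomposition_intRuns (σ : List ℕ) : IsRunDecomposition (intRuns σ) := by
  induction σ with
  | nil => exact ⟨fun _ h => (not_mem_nil h).elim, fun _ h => (not_mem_nil h).elim, .nil⟩
  | cons a σ ih =>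
    cases σ with
    | nil =>
      exact isRunDecomposition_cons.2 ⟨cons_ne_nil _ _, pairwise_singleton _ _, by simp, ih⟩
    | cons b σ =>
      obtain ⟨A, R, h, h'⟩ := exists_splitWhen_cons_cons (fun a b => decide (b ≤ a)) a b σ
      rw [intRuns, runs, h] at ih
      rw [intRuns, runs, h']
      obtain ⟨-, hA, hbreak, hR⟩ := isRunDecomposition_cons.1 ih
      by_cases hba : b ≤ a
      · rw [if_pos (decide_eq_true hba)]
        exact isRunDecomposition_cons.2
          ⟨cons_ne_nil _ _, pairwise_singleton _ _, by simpa [intWord], ih⟩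
      · rw [if_neg (mt of_decide_eq_true hba)]
        have hab : (a : ℤ) < b := Nat.cast_lt.2 (not_le.1 hba)
        exact isRunDecomposition_cons.2 ⟨cons_ne_nil _ _,
          (isChain_cons_cons.2 ⟨hab, hA.isChain⟩).pairwise, by simpa [intWord] using hbreak, hR⟩

/-- The number of letters of `σ` before the first run `ρ⁽ⁱ⁾` with `r̂_i ≤ k`. -/
def desLengthAbove (σ : List ℕ) (k : ℤ) : ℕ :=
  lengthAbove (((intRuns σ).headD []).headD 0) (intRuns σ) k

theorem desWord_eq_some_iff {d : List ℕ} :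
    let H := hatMinsBelow (((intRuns σ).headD []).headD 0) ((intRuns σ).map (·.headD 0))
    desWord σ = some d ↔ (∀ x ∈ H, 0 < x) ∧ buildWeakComp H ((intRuns σ).map length) = d := by
  have hhat : hatMins ((intRuns σ).map (·.headD 0)) =
      hatMinsBelow (((intRuns σ).headD []).headD 0) ((intRuns σ).map (·.headD 0)) :=
    hatMins_eq_hatMinsBelow fun r hr => by
      cases hR : intRuns σ <;> simp_all
  have hdes : desWord σ =
      desFromBlocks ((intRuns σ).map (·.headD 0)) ((intRuns σ).map length) := by
    rw [desWord, intRuns, map_map, map_map]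
    congr 1 <;> refine map_congr_left fun A _ => ?_
    · cases A <;> rfl
    · exact (length_intWord A).symm
  intro H
  rw [hdes, desFromBlocks_eq_some_iff (hhat ▸ pairwise_hatMinsBelow _ _), hhat]

theorem sum_take_add_desLengthAbove {d : List ℕ} (h : desWord σ = some d) (k : ℕ) :
    (d.take k).sum + desLengthAbove σ k = σ.length := by
  obtain ⟨hpos, rfl⟩ := desWord_eq_some_iff.1 h
  rw [sum_take_buildWeakComp _ (pairwise_hatMinsBelow _ _) hpos, desLengthAbove,
    sum_add_lengthAbove, flatten_intRuns, length_intWord]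

theorem exists_desWord_eq_some (h : desLengthAbove σ 0 = σ.length) : ∃ d, desWord σ = some d :=
  ⟨_, desWord_eq_some_iff.2 ⟨lt_of_mem_hatMinsBelow (isRunDecomposition_intRuns σ).ne_nil
    (by rwa [flatten_intRuns, length_intWord]), rfl⟩⟩

theorem desLengthAbove_le_length (σ : List ℕ) (k : ℤ) : desLengthAbove σ k ≤ σ.length :=
  (lengthAbove_le _ (intRuns σ) k).trans_eq (by rw [flatten_intRuns, length_intWord])

theorem lt_of_mem_take_desLengthAbove {k c : ℤ}
    (hc : c ∈ (intWord σ).take (desLengthAbove σ k)) : k < c := by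
  rw [← flatten_intRuns] at hc
  exact lt_of_mem_take_lengthAbove (isRunDecomposition_intRuns σ) c hc

theorem desLengthAbove_le_maxPrefixLength (e : w ≈ₖ intWord σ) (k : ℤ) :
    desLengthAbove σ k ≤ maxPrefixLength w k := by
  have hprefix : IsPrefixAbove k w ((intWord σ).take (desLengthAbove σ k)) :=
    ⟨⟨_, (take_append_drop (desLengthAbove σ k) (intWord σ)).symm ▸ e⟩,
      fun _ => lt_of_mem_take_desLengthAbove⟩
  have hle := hprefix.length_le
  rwa [length_take_of_le (length_intWord σ ▸ desLengthAbove_le_length σ k)] at hle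

theorem IsFlagWord.desLengthAbove_eq (h : IsFlagWord w (intWord σ)) (hw : Reduced w) (k : ℤ) :
    desLengthAbove σ k = maxPrefixLength w k := by
  refine (desLengthAbove_le_maxPrefixLength h.equiv k).antisymm ?_
  have hflag : IsFlagWord w ([] ++ (intRuns σ).flatten) := by rwa [nil_append, flatten_intRuns]
  have hR := isRunDecomposition_intRuns σ
  refine (hflag.maxPrefixLength_le_add_lengthAbove hw hR (fun j hj => ?_) k).trans_eq
    (Nat.zero_add _)
  obtain ⟨m, hm⟩ := Nat.exists_eq_add_of_lt hj
  cases hσ : intRuns σ with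
  | nil =>
    have hle := maxPrefixLength_le_length w j
    rw [h.equiv.length_eq, ← flatten_intRuns, hσ] at hle
    exact absurd (hj.trans_le hle) (Nat.not_lt_zero _)
  | cons A R =>
    obtain ⟨a, A, rfl⟩ := exists_cons_of_ne_nil (hR.ne_nil A (hσ ▸ mem_cons_self))
    refine h.lt_of_mem_take j _ ?_
    rw [← flatten_intRuns, hσ, hm]
    exact mem_cons_self

end DesWord

/-! ### Reduced words of permutations -/

section Perm

variable {u v w : List ℤ} {ρ σ : List ℕ}

/-- `toPerm` for integer words, where the generators `s_i`, `i ∈ ℤ`, permute `ℤ`. -/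
def intPerm (w : List ℤ) : Equiv.Perm ℤ :=
  (w.map fun i => Equiv.swap i (i + 1)).prod

theorem intPerm_append (u v : List ℤ) : intPerm (u ++ v) = intPerm u * intPerm v := by
  simp [intPerm]

theorem intPerm_cons (i : ℤ) (w : List ℤ) :
    intPerm (i :: w) = Equiv.swap i (i + 1) * intPerm w :=
  prod_cons

theorem commute_swap_swap {x y : ℤ} (h : x + 1 < y) :
    Commute (Equiv.swap x (x + 1)) (Equiv.swap y (y + 1)) := by
  ext i
  simp only [Equiv.Perm.mul_apply, Equiv.swap_apply_def]
  split_ifs <;> lia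

theorem swap_mul_swap_mul_swap_braid (x : ℤ) :
    Equiv.swap x (x + 1) * (Equiv.swap (x + 1) (x + 1 + 1) * Equiv.swap x (x + 1)) =
      Equiv.swap (x + 1) (x + 1 + 1) * (Equiv.swap x (x + 1) *
        Equiv.swap (x + 1) (x + 1 + 1)) := by
  ext i
  simp only [Equiv.Perm.mul_apply, Equiv.swap_apply_def]
  split_ifs <;> lia

theorem CoxeterEquiv.intPerm_eq (h : CoxeterEquiv u v) : intPerm u = intPerm v := by
  refine map_eq_of_eqvGen intPerm (fun a b h => ?_) h
  cases h with
  | comm p s h => simp only [intPerm_append, intPerm_cons, (commute_swap_swap h).left_comm]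
  | braid p s x =>
    simp only [intPerm_append, intPerm_cons, ← mul_assoc _ _ (intPerm s),
      swap_mul_swap_mul_swap_braid]

theorem CoxeterEquiv.length_eq (h : CoxeterEquiv u v) : u.length = v.length :=
  map_eq_of_eqvGen List.length (fun a b h => by cases h <;> simp) h

theorem CoxeterEquiv.mem_iff (h : CoxeterEquiv u v) (c : ℤ) : c ∈ u ↔ c ∈ v :=
  iff_of_eq <| map_eq_of_eqvGen (c ∈ ·)
    (fun a b h => by cases h <;> simp only [mem_append, mem_cons, eq_iff_iff] <;> tauto) h

theorem intPerm_intWord_natCast (σ : List ℕ) (n : ℕ) : intPerm (intWord σ) n = toPerm σ n := by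
  induction σ with
  | nil => rfl
  | cons i σ ih =>
    have hswap := Nat.cast_injective (R := ℤ).swap_apply i (i + 1) (toPerm σ n)
    rw [intWord, map_cons, ← intWord, intPerm_cons, Equiv.Perm.mul_apply, ih]
    simpa [toPerm] using hswap

theorem toPerm_eq_of_intPerm_eq (h : intPerm (intWord ρ) = intPerm (intWord σ)) :
    toPerm ρ = toPerm σ := by
  ext n
  rw [← Nat.cast_inj (R := ℤ), ← intPerm_intWord_natCast, ← intPerm_intWord_natCast, h]

namespace IsReducedWord

theorem length_le {w : List ℤ} (h : IsReducedWord ρ) (hw : ∀ c ∈ w, 1 ≤ c)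
    (hperm : intPerm w = intPerm (intWord ρ)) : ρ.length ≤ w.length := by
  obtain ⟨σ, rfl⟩ : ∃ σ, intWord σ = w :=
    ⟨_, intWord_map_toNat fun c hc => zero_le_one.trans (hw c hc)⟩
  rw [length_intWord]
  exact h.2 σ (by simpa [intWord] using hw) (toPerm_eq_of_intPerm_eq hperm)

theorem one_le_of_mem_intWord (h : IsReducedWord ρ) : ∀ c ∈ intWord ρ, 1 ≤ c := by
  simpa [intWord] using h.1

theorem reduced_intWord (h : IsReducedWord ρ) : Reduced (intWord ρ) := by
  rintro _ e p a s rfl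
  have hpos : ∀ c ∈ p ++ s, 1 ≤ c := fun c hc =>
    h.one_le_of_mem_intWord c ((e.mem_iff c).2 (by grind))
  have hperm : intPerm (p ++ s) = intPerm (intWord ρ) := by
    rw [e.intPerm_eq]
    simp [intPerm_append, intPerm_cons]
  have hle := h.length_le hpos hperm
  have hlen := e.length_eq
  simp only [length_intWord, length_append, length_cons] at hle hlen
  lia

theorem of_knuthEquiv (h : IsReducedWord ρ) (e : intWord ρ ≈ₖ intWord σ) : IsReducedWord σ := by
  have hlen := e.length_eq
  have hperm : toPerm ρ = toPerm σ := toPerm_eq_of_intPerm_eq e.coxeterEquiv.intPerm_eq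
  rw [length_intWord, length_intWord] at hlen
  refine ⟨fun i hi => ?_, fun τ hτ hperm' => hlen ▸ h.2 τ hτ (hperm'.trans hperm.symm)⟩
  exact_mod_cast h.one_le_of_mem_intWord i ((e.mem_iff i).2 (mem_map_of_mem hi))

end IsReducedWord

theorem Reduced.eq_add_one_or_eq_add_one {a b : ℤ} (h : Reduced [a, b, a]) :
    b = a + 1 ∨ a = b + 1 := by
  by_contra! hne
  rcases lt_trichotomy a b with hab | rfl | hab
  · exact h _ (.rel _ _ (.comm [] [a] (show a + 1 < b by lia))) [b] a [] rfl
  · exact not_reduced_append_cons_cons [] [a] a h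
  · exact h _ (.rel _ _ (.comm [a] [] (show b + 1 < a by lia))) [] a [b] rfl

theorem knuthEquiv_ckTriple {a b c : ℕ} (h : Reduced (intWord [a, b, c])) :
    intWord [a, b, c] ≈ₖ
      intWord [(ckTriple a b c).1, (ckTriple a b c).2.1, (ckTriple a b c).2.2] := by
  simp only [intWord, map_cons, map_nil, ckTriple] at h ⊢
  split_ifs with hac hwitness hwitness'
  · subst hac
    rcases h.eq_add_one_or_eq_add_one with h | h <;> rw [h]
    · exact (KnuthStep.braid [] [] (a : ℤ)).equiv
    · exact (KnuthStep.braid [] [] (b : ℤ)).equiv.symm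
  · rcases hwitness with ⟨hac, hba⟩ | ⟨hca, hab⟩
    · exact (KnuthStep.witness_left [] [] (Nat.cast_lt.2 hba) (Nat.cast_lt.2 hac)).equiv
    · exact (KnuthStep.witness_left [] [] (Nat.cast_lt.2 hca) (Nat.cast_lt.2 hab)).equiv.symm
  · rcases hwitness' with ⟨hca, hbc⟩ | ⟨hac, hcb⟩
    · exact (KnuthStep.witness_right [] [] (Nat.cast_lt.2 hbc) (Nat.cast_lt.2 hca)).equiv.symm
    · exact (KnuthStep.witness_right [] [] (Nat.cast_lt.2 hac) (Nat.cast_lt.2 hcb)).equiv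
  · exact .refl _

theorem ckMove_append (p s : List ℕ) (a b c : ℕ) :
    ckMove (s.length + 2) (p ++ [a, b, c] ++ s) =
      p ++ [(ckTriple a b c).1, (ckTriple a b c).2.1, (ckTriple a b c).2.2] ++ s := by
  have hp : (p ++ [a, b, c] ++ s).length - (s.length + 2) - 1 = p.length := by
    simp only [length_append, length_cons, length_nil]
    lia
  rw [ckMove, if_pos ⟨by lia, by simp only [length_append, length_cons]; lia⟩, hp]
  simp [set_append_right]

theorem exists_eq_append_triple {i : ℕ} (h : 2 ≤ i ∧ i + 1 ≤ ρ.length) :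
    ∃ p s a b c, s.length + 2 = i ∧ ρ = p ++ [a, b, c] ++ s := by
  have hlen : (ρ.drop (ρ.length - i - 1)).length = i + 1 := by
    rw [length_drop]
    lia
  have hsplit := take_append_drop (ρ.length - i - 1) ρ
  match hs : ρ.drop (ρ.length - i - 1) with
  | a :: b :: c :: s =>
    exact ⟨ρ.take (ρ.length - i - 1), s, a, b, c, by grind, by simpa [hs] using hsplit.symm⟩
  | [] | [_] | [_, _] => grind

theorem knuthEquiv_ckMove (i : ℕ) (h : Reduced (intWord ρ)) :
    intWord ρ ≈ₖ intWord (ckMove i ρ) := by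
  by_cases hi : 2 ≤ i ∧ i + 1 ≤ ρ.length
  · obtain ⟨p, s, a, b, c, rfl, rfl⟩ := exists_eq_append_triple hi
    rw [ckMove_append]
    simp only [intWord, map_append] at h ⊢
    exact (knuthEquiv_ckTriple h.of_append_append).append_append _ _
  · rw [ckMove, if_neg hi]
    exact .refl _

namespace CKEquiv

theorem trans {τ : List ℕ} : CKEquiv ρ σ → CKEquiv σ τ → CKEquiv ρ τ := by
  rintro ⟨m, rfl⟩ ⟨m', rfl⟩
  exact ⟨m ++ m', foldl_append.symm⟩

theorem knuthEquiv (h : Reduced (intWord ρ)) (e : CKEquiv ρ σ) : intWord ρ ≈ₖ intWord σ := by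
  obtain ⟨ms, rfl⟩ := e
  induction ms generalizing ρ with
  | nil => exact .refl _
  | cons i ms ih =>
    have e := knuthEquiv_ckMove i h
    exact e.trans (ih (h.of_knuthEquiv e))

theorem of_ckTriple_eq {a b c a' b' c' : ℕ} (p s : List ℕ) (h : ckTriple a b c = (a', b', c')) :
    CKEquiv (p ++ a :: b :: c :: s) (p ++ a' :: b' :: c' :: s) :=
  ⟨[s.length + 2], by simpa [h] using (ckMove_append p s a b c).symm⟩

end CKEquiv

theorem KnuthStep.ckEquiv_map_toNat (h : KnuthStep u v) (hu : ∀ c ∈ u, 0 ≤ c) :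
    CKEquiv (u.map Int.toNat) (v.map Int.toNat) ∧ CKEquiv (v.map Int.toNat) (u.map Int.toNat) := by
  cases h <;> simp only [forall_mem_append, forall_mem_cons, map_append, map_cons] at hu ⊢ <;>
    refine ⟨.of_ckTriple_eq _ _ ?_, .of_ckTriple_eq _ _ ?_⟩ <;> grind [ckTriple]

theorem KnuthEquiv.ckEquiv_map_toNat (h : u ≈ₖ v) (hu : ∀ c ∈ u, 0 ≤ c) :
    CKEquiv (u.map Int.toNat) (v.map Int.toNat) ∧ CKEquiv (v.map Int.toNat) (u.map Int.toNat) := by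
  induction h with
  | rel u v h => exact h.ckEquiv_map_toNat hu
  | refl u => exact ⟨⟨[], rfl⟩, ⟨[], rfl⟩⟩
  | symm u v e ih => exact (ih fun c hc => hu c ((KnuthEquiv.mem_iff e c).1 hc)).symm
  | trans u v w e _ ih ih' =>
    have h := ih hu
    have h' := ih' fun c hc => hu c ((KnuthEquiv.mem_iff e c).2 hc)
    exact ⟨h.1.trans h'.1, h'.2.trans h.2⟩

theorem ckEquiv_iff_knuthEquiv (h : Reduced (intWord ρ)) :
    CKEquiv ρ σ ↔ intWord ρ ≈ₖ intWord σ := by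
  refine ⟨CKEquiv.knuthEquiv h, fun e => ?_⟩
  simpa only [map_toNat_intWord] using (e.ckEquiv_map_toNat (by simp [intWord])).1

theorem exists_isFlagWord_intWord (h : IsReducedWord ρ) :
    ∃ σ, IsFlagWord (intWord ρ) (intWord σ) := by
  obtain ⟨y, hy⟩ := exists_isFlagWord h.reduced_intWord
  refine ⟨y.map Int.toNat, (intWord_map_toNat fun c hc => ?_).symm ▸ hy⟩
  exact zero_le_one.trans (h.one_le_of_mem_intWord c ((hy.equiv.mem_iff c).2 hc))

theorem domLe_iff_desLengthAbove_le {d e : List ℕ} (hρ : desWord ρ = some d)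
    (hσ : desWord σ = some e) (hlen : ρ.length = σ.length) :
    domLe d e ↔ ∀ k : ℕ, desLengthAbove σ k ≤ desLengthAbove ρ k := by
  refine forall_congr' fun k => ?_
  have hd := sum_take_add_desLengthAbove hρ k
  have he := sum_take_add_desLengthAbove hσ k
  lia

theorem IsFlagWord.exists_desWord_eq_some (hρ : IsReducedWord ρ)
    (h : IsFlagWord (intWord ρ) (intWord σ)) : ∃ d, desWord σ = some d := by
  refine EG.exists_desWord_eq_some ?_
  rw [h.desLengthAbove_eq hρ.reduced_intWord,
    maxPrefixLength_eq_length fun c hc => Int.lt_of_add_one_le (hρ.one_le_of_mem_intWord c hc),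
    h.equiv.length_eq, length_intWord]

theorem IsFlagWord.isYam (hρ : IsReducedWord ρ) (h : IsFlagWord (intWord ρ) (intWord σ)) :
    IsYam σ := by
  have hσ := hρ.of_knuthEquiv h.equiv
  obtain ⟨d, hd⟩ := h.exists_desWord_eq_some hρ
  refine ⟨hσ, d, hd, fun τ e hστ he => ?_⟩
  have hequiv := hστ.knuthEquiv hσ.reduced_intWord
  have hlen := hequiv.length_eq
  rw [length_intWord, length_intWord] at hlen
  refine (domLe_iff_desLengthAbove_le hd he hlen).2 fun k => ?_
  rw [h.desLengthAbove_eq hρ.reduced_intWord]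
  exact desLengthAbove_le_maxPrefixLength (h.equiv.trans hequiv) k

theorem IsYam.isFlagWord (h : IsYam σ) : IsFlagWord (intWord σ) (intWord σ) := by
  obtain ⟨hσ, d, hd, hmin⟩ := h
  refine ⟨.refl _, fun k c hc => ?_⟩
  rcases lt_or_ge k 0 with hk | hk
  · exact hk.trans (Int.lt_of_add_one_le (hσ.one_le_of_mem_intWord c (mem_of_mem_take hc)))
  obtain ⟨k, rfl⟩ := Int.eq_ofNat_of_zero_le hk
  obtain ⟨τ, hτ⟩ := exists_isFlagWord_intWord hσ
  obtain ⟨e, he⟩ := hτ.exists_desWord_eq_some hσ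
  have hdom := hmin τ e ((ckEquiv_iff_knuthEquiv hσ.reduced_intWord).2 hτ.equiv) he
  have hlen := hτ.equiv.length_eq
  rw [length_intWord, length_intWord] at hlen
  have hle := (domLe_iff_desLengthAbove_le hd he hlen).1 hdom k
  rw [hτ.desLengthAbove_eq hσ.reduced_intWord] at hle
  exact lt_of_mem_take_desLengthAbove (take_subset_take_left _ hle hc)

end Perm

/-- Every Coxeter–Knuth equivalence class of reduced words for a
permutation `w` contains exactly one Yamanouchi reduced word. -/
theorem unique_yamanouchi_in_class (w : Equiv.Perm ℕ) (ρ : List ℕ)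
    (h : ReducedWordFor ρ w) :
    ∃! σ, CKEquiv ρ σ ∧ IsYam σ := by
  have hρ := h.1
  have hd := hρ.reduced_intWord
  obtain ⟨σ, hσ⟩ := exists_isFlagWord_intWord hρ
  refine ⟨σ, ⟨(ckEquiv_iff_knuthEquiv hd).2 hσ.equiv, hσ.isYam hρ⟩, fun τ hτ => ?_⟩
  have e := (ckEquiv_iff_knuthEquiv hd).1 hτ.1
  exact intWord_injective ((hτ.2.isFlagWord.of_equiv e).unique hσ hd)

end EG
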